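/- arXiv:1011.2719 — 8 statements merged into one kernel-verified Lean document; each statement's English description precedes it below -/
import Mathlib

section
/- Let G be a port-labeled graph with n nodes and let u, v be nodes of G. If the truncated views of u and v at depth n−1 are equal, i.e. V^{n−1}(u) = V^{n−1}(v), then the views of u and v are equal, i.e. V^t(u) = V^t(v) for every t ≥ 0. -/
/-- A port-labeled graph: a finite connected simple undirected graph in which each
node `v` of degree `deg v` has its incident edges assigned distinct port numbers
`1,…,deg v`.  It is encoded by a fixed-point-free involution on darts: the dart
`(v, i)` (for `i < deg v`, representing port `i+1` at `v`) is matched with the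
dart `(u, j)` when the edge with port `i+1` at `v` leads to `u` entering via port `j+1`. -/
structure PortGraph where
  /-- number of nodes; the nodes are `Fin n` -/
  n : ℕ
  npos : 0 < n
  /-- degree of each node -/
  deg : Fin n → ℕ
  /-- the dart-matching function (only its values on `i < deg v` are relevant) -/
  mtch : Fin n → ℕ → Fin n × ℕ
  mtch_lt : ∀ (v : Fin n) (i : ℕ), i < deg v → (mtch v i).2 < deg (mtch v i).1
  mtch_invol : ∀ (v : Fin n) (i : ℕ), i < deg v →
      mtch (mtch v i).1 (mtch v i).2 = (v, i)
  /-- no self-loops -/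
  no_loops : ∀ (v : Fin n) (i : ℕ), i < deg v → (mtch v i).1 ≠ v
  /-- no multiple edges -/
  no_multi : ∀ (v : Fin n) (i j : ℕ), i < deg v → j < deg v →
      (mtch v i).1 = (mtch v j).1 → i = j
  /-- connectivity -/
  connected : ∀ u v : Fin n,
    Relation.ReflTransGen (fun a b => ∃ i < deg a, (mtch a i).1 = b) u v

/-- Adjacency in a port-labeled graph. -/
def PortGraph.Adj (G : PortGraph) (u v : Fin G.n) : Prop :=
  ∃ i < G.deg u, (G.mtch u i).1 = v

/-- Rooted trees with edges labeled by pairs of port numbers, used as (truncated) views. -/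
inductive ViewTree : Type
  | node : List (ℕ × ℕ × ViewTree) → ViewTree

/-- The truncated view `V^t(v)` at depth `t` from node `v`. -/
def PortGraph.view (G : PortGraph) : ℕ → Fin G.n → ViewTree
  | 0, _ => ViewTree.node []
  | t + 1, v => ViewTree.node <| (List.range (G.deg v)).map fun i =>
      (i + 1, (G.mtch v i).2 + 1, G.view t (G.mtch v i).1)

/-- The equal-views equivalence relation (`u ∼ v` iff `V(u) = V(v)`). -/
def PortGraph.viewSetoid (G : PortGraph) : Setoid (Fin G.n) where
  r u v := ∀ t, G.view t u = G.view t v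
  iseqv := ⟨fun _ _ => rfl, fun h t => (h t).symm, fun h h' t => (h t).trans (h' t)⟩

/-- `n̂`: the number of equivalence classes of the equal-views relation
(the number of nodes of the quotient graph). -/
noncomputable def PortGraph.nhat (G : PortGraph) : ℕ := Nat.card (Quotient G.viewSetoid)

/-- `G.reachIn k u v` means there is a walk of length at most `k` from `u` to `v`,
i.e. the graph distance from `u` to `v` is at most `k`. -/
def PortGraph.reachIn (G : PortGraph) : ℕ → Fin G.n → Fin G.n → Prop
  | 0, u, v => u = v
  | k + 1, u, v => G.reachIn k u v ∨ ∃ w, G.reachIn k u w ∧ G.Adj w v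

/-- A port-preserving isomorphism between port-labeled graphs. -/
def IsPortIso (G H : PortGraph) (e : Fin G.n ≃ Fin H.n) : Prop :=
  (∀ v, H.deg (e v) = G.deg v) ∧
  ∀ (v : Fin G.n) (i : ℕ), i < G.deg v →
    H.mtch (e v) i = (e (G.mtch v i).1, (G.mtch v i).2)

theorem PortGraph.view_succ_iff (G : PortGraph) (t : ℕ) (u v : Fin G.n) :
    G.view (t + 1) u = G.view (t + 1) v ↔ G.deg u = G.deg v ∧ ∀ i < G.deg u,
      (G.mtch u i).2 = (G.mtch v i).2 ∧
        G.view t (G.mtch u i).1 = G.view t (G.mtch v i).1 := by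
  simp only [PortGraph.view, ViewTree.node.injEq]
  constructor
  · intro h
    have hl := congrArg List.length h
    simp only [List.length_map, List.length_range] at hl
    refine ⟨hl, ?_⟩
    rw [← hl, List.map_inj_left] at h
    intro i hi
    have := h i (List.mem_range.2 hi)
    simpa using this
  · rintro ⟨hd, h⟩
    rw [← hd, List.map_inj_left]
    intro i hi
    have := h i (List.mem_range.1 hi)
    simpa using this

theorem PortGraph.view_of_succ (G : PortGraph) (t : ℕ) : ∀ u v : Fin G.n,
    G.view (t + 1) u = G.view (t + 1) v → G.view t u = G.view t v := by
  induction t with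
  | zero => intro u v _; rfl
  | succ t ih =>
    intro u v h
    rw [view_succ_iff] at h ⊢
    exact ⟨h.1, fun i hi => ⟨(h.2 i hi).1, ih _ _ (h.2 i hi).2⟩⟩

theorem PortGraph.view_of_le (G : PortGraph) {s t : ℕ} (hst : s ≤ t) (u v : Fin G.n)
    (h : G.view t u = G.view t v) : G.view s u = G.view s v := by
  induction t, hst using Nat.le_induction with
  | base => exact h
  | succ t _ ih => exact ih (G.view_of_succ t u v h)

theorem PortGraph.view_stable (G : PortGraph) (s : ℕ)
    (hs : ∀ u v : Fin G.n, G.view s u = G.view s v → G.view (s + 1) u = G.view (s + 1) v)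
    (k : ℕ) : ∀ u v : Fin G.n, G.view s u = G.view s v → G.view (s + k) u = G.view (s + k) v := by
  induction k with
  | zero => exact fun u v h => h
  | succ k ih =>
    intro u v h
    have h1 := (G.view_succ_iff s u v).1 (hs u v h)
    exact (G.view_succ_iff (s + k) u v).2
      ⟨h1.1, fun i hi => ⟨(h1.2 i hi).1, ih _ _ (h1.2 i hi).2⟩⟩

theorem PortGraph.stable_or_card (G : PortGraph) (t : ℕ) :
    (∃ s ≤ t, ∀ u v : Fin G.n, G.view s u = G.view s v → G.view (s + 1) u = G.view (s + 1) v) ∨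
      t + 1 ≤ (Set.range (G.view t)).ncard := by
  induction t with
  | zero =>
    right
    have : (Set.range (G.view 0)).Nonempty := ⟨_, ⟨⟨0, G.npos⟩, rfl⟩⟩
    have := (Set.ncard_pos (Set.finite_range (G.view 0))).2 this
    omega
  | succ t ih =>
    rcases ih with ⟨s, hs, h⟩ | ih
    · exact Or.inl ⟨s, by omega, h⟩
    by_cases hc : t + 2 ≤ (Set.range (G.view (t + 1))).ncard
    · exact Or.inr hc
    left
    obtain ⟨f, hf⟩ : ∃ f : ViewTree → ViewTree, G.view t = f ∘ G.view (t + 1) := by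
      have : Function.FactorsThrough (G.view t) (G.view (t + 1)) :=
        fun u v h => G.view_of_succ t u v h
      exact ⟨Function.extend (G.view (t + 1)) (G.view t) id,
        funext fun x => (this.extend_apply id x).symm⟩
    have himg : Set.range (G.view t) = f '' Set.range (G.view (t + 1)) := by
      rw [hf, Set.range_comp]
    have hle := Set.ncard_image_le (f := f) (Set.finite_range (G.view (t + 1)))
    have hinj : Set.InjOn f (Set.range (G.view (t + 1))) := by
      apply Set.injOn_of_ncard_image_eq _ (Set.finite_range _)
      rw [himg] at ih
      omega
    refine ⟨t, by omega, fun u v h => hinj ⟨u, rfl⟩ ⟨v, rfl⟩ ?_⟩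
    rw [hf] at h
    exact h

/-- If the truncated views at depth `n-1` of two nodes of an `n`-node
port-labeled graph coincide, then their views coincide (truncated views agree at every depth). -/
theorem truncated_view_eq_of_depth_card (G : PortGraph) (u v : Fin G.n)
    (h : G.view (G.n - 1) u = G.view (G.n - 1) v) :
    ∀ t : ℕ, G.view t u = G.view t v := by
  intro t
  rcases G.stable_or_card (G.n - 1) with ⟨s, hs, hst⟩ | hc
  · have h1 := G.view_stable s hst t u v (G.view_of_le hs u v h)
    exact G.view_of_le (by omega) u v h1
  · have hinj : Set.InjOn (G.view (G.n - 1)) Set.univ := by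
      apply Set.injOn_of_ncard_image_eq _ Set.finite_univ
      apply le_antisymm (Set.ncard_image_le Set.finite_univ)
      rw [Set.image_univ, Set.ncard_univ, Nat.card_fin]
      omega
    rw [hinj (Set.mem_univ u) (Set.mem_univ v) h]
end

section
/- Let G be a port-labeled graph and let n̂ be the number of equivalence classes of the relation 'having equal views' on the nodes of G. Then for every pair of nodes v and u of G there exists a node u' with V(u') = V(u) whose graph distance from v is at most n̂ − 1. (Consequently, the truncated view of G from any node at depth 2(n̂−1) suffices to reconstruct the quotient of G by the equal-views relation.) -/
/-- Edges lift along equality of views. -/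
theorem PortGraph.adj_lift (G : PortGraph) (w w' x : Fin G.n)
    (h : ∀ t, G.view t w = G.view t w') (hadj : G.Adj w x) :
    ∃ x', G.Adj w' x' ∧ ∀ t, G.view t x' = G.view t x := by
  obtain ⟨i, hi, rfl⟩ := hadj
  have hl : ∀ t, (List.range (G.deg w)).map (fun i =>
      (i + 1, (G.mtch w i).2 + 1, G.view t (G.mtch w i).1)) =
      (List.range (G.deg w')).map (fun i =>
      (i + 1, (G.mtch w' i).2 + 1, G.view t (G.mtch w' i).1)) := fun t => by
    have := h (t + 1)
    simp only [PortGraph.view] at this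
    exact ViewTree.node.inj this
  have hd : G.deg w = G.deg w' := by
    have := congrArg List.length (hl 0)
    simpa using this
  refine ⟨(G.mtch w' i).1, ⟨i, hd ▸ hi, rfl⟩, fun t => ?_⟩
  have h2 := congrArg (fun l => l[i]?) (hl t)
  have hi' : i < G.deg w' := hd ▸ hi
  simp [hi, hi'] at h2
  exact h2.2.symm

/-- For every pair of nodes `v`, `u` there is a node `u'` with the same
view as `u` at distance at most `n̂ - 1` from `v` (where `n̂` is the number of classes of
the equal-views relation). -/
theorem exists_view_representative_close (G : PortGraph) (v u : Fin G.n) :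
    ∃ u' : Fin G.n, (∀ t : ℕ, G.view t u' = G.view t u) ∧ G.reachIn (G.nhat - 1) v u' := by
  classical
  let S : ℕ → Set (Quotient G.viewSetoid) := fun k =>
    {q | ∃ x, G.reachIn k v x ∧ (Quotient.mk G.viewSetoid x) = q}
  have hmono : ∀ k, S k ⊆ S (k + 1) := by
    rintro k q ⟨x, hx, rfl⟩
    exact ⟨x, Or.inl hx, rfl⟩
  have hstep : ∀ k w x, Quotient.mk G.viewSetoid w ∈ S k → G.Adj w x →
      Quotient.mk G.viewSetoid x ∈ S (k + 1) := by
    rintro k w x ⟨w', hw', he⟩ hadj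
    obtain ⟨x', hx', hv⟩ := G.adj_lift w w' x (fun t => (Quotient.exact he t).symm) hadj
    exact ⟨x', Or.inr ⟨w', hw', hx'⟩, Quotient.sound hv⟩
  have h0 : ∀ k, Quotient.mk G.viewSetoid v ∈ S k := by
    intro k
    induction k with
    | zero => exact ⟨v, rfl, rfl⟩
    | succ k ih => exact hmono k ih
  have hclosed : ∀ k, S (k + 1) = S k → S k = Set.univ := by
    intro k hk
    refine Set.eq_univ_of_forall fun q => ?_
    induction q using Quotient.inductionOn with
    | h x =>
      have hc := G.connected v x
      induction hc with
      | refl => exact h0 k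
      | tail _ hab ih =>
        rw [← hk]
        exact hstep k _ _ ih hab
  have hcard : ∀ k, S k = Set.univ ∨ k + 1 ≤ (S k).ncard := by
    intro k
    induction k with
    | zero =>
      right
      have : 0 < (S 0).ncard := (Set.ncard_pos (Set.toFinite _)).2 ⟨_, h0 0⟩
      omega
    | succ k ih =>
      rcases ih with ih | ih
      · left
        exact Set.univ_subset_iff.1 (ih ▸ hmono k)
      · by_cases hk : S (k + 1) = S k
        · left
          rw [hk]
          exact hclosed k hk
        · right
          have hss : S k ⊂ S (k + 1) := lt_of_le_of_ne (hmono k) (Ne.symm hk)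
          have := Set.ncard_lt_ncard hss (Set.toFinite _)
          omega
  have huniv : S (G.nhat - 1) = Set.univ := by
    rcases hcard (G.nhat - 1) with h | h
    · exact h
    · apply Set.eq_of_subset_of_ncard_le (Set.subset_univ _) _ (Set.toFinite _)
      rw [Set.ncard_univ]
      change G.nhat ≤ _
      omega
  have hu : Quotient.mk G.viewSetoid u ∈ S (G.nhat - 1) := huniv ▸ Set.mem_univ _
  obtain ⟨x, hx, he⟩ := hu
  exact ⟨x, fun t => Quotient.exact he t, hx⟩
end

section
/- There is no single-agent protocol σ such that the execution of σ halts from every start node of every port-labeled graph and halts with decision 'yes' from v in G if and only if G is a path. (That is, the problem of deciding whether the underlying graph is a path is not single-agent decidable.) -/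
/-- An observation of the agent: the degree of the current node and the port
number through which the agent entered it (`0` in the initial round). -/
abbrev Obs : Type := ℕ × ℕ

/-- An action of a (deciding) mobile agent: either halt with a Boolean decision
(`true` = "yes", `false` = "no"), or move leaving through port `p`. -/
inductive AgentAction : Type
  | halt (decision : Bool)
  | move (p : ℕ)

/-- A single-agent protocol: a function from finite sequences of observations to actions. -/
abbrev AgentProtocol : Type := List Obs → AgentAction

/-- The state of an agent: current position, port of entry (`0` initially), and
the history of observations made so far (including the current one). -/
structure AgentState (G : PortGraph) where
  pos : Fin G.n
  entry : ℕ
  hist : List Obs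

/-- One round of the execution of protocol `σ`. -/
def PortGraph.stepAgent (G : PortGraph) (σ : AgentProtocol) (c : AgentState G) : AgentState G :=
  let next : Fin G.n × ℕ :=
    match σ c.hist with
    | .halt _ => (c.pos, c.entry)
    | .move p =>
        if 1 ≤ p ∧ p - 1 < G.deg c.pos then
          ((G.mtch c.pos (p - 1)).1, (G.mtch c.pos (p - 1)).2 + 1)
        else (c.pos, c.entry)
  ⟨next.1, next.2, c.hist ++ [(G.deg next.1, next.2)]⟩

/-- The execution of protocol `σ` in `G` from start node `v`: state at round `t`. -/
def PortGraph.run (G : PortGraph) (σ : AgentProtocol) (v : Fin G.n) : ℕ → AgentState G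
  | 0 => ⟨v, 0, [(G.deg v, 0)]⟩
  | t + 1 => G.stepAgent σ (G.run σ v t)

/-- The observation made at round `t` of the execution. -/
def PortGraph.obsAt (G : PortGraph) (σ : AgentProtocol) (v : Fin G.n) (t : ℕ) : Obs :=
  (G.deg (G.run σ v t).pos, (G.run σ v t).entry)

/-- The action taken at round `t` of the execution. -/
def PortGraph.actAt (G : PortGraph) (σ : AgentProtocol) (v : Fin G.n) (t : ℕ) : AgentAction :=
  σ (G.run σ v t).hist

/-- The execution halts (for the first time) at round `t` with decision `b`. -/
def PortGraph.haltsAtWith (G : PortGraph) (σ : AgentProtocol) (v : Fin G.n) (t : ℕ) (b : Bool) :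
    Prop :=
  G.actAt σ v t = AgentAction.halt b ∧ ∀ s < t, ∀ b', G.actAt σ v s ≠ AgentAction.halt b'

/-- The execution of `σ` from `v` in `G` halts. -/
def PortGraph.halts (G : PortGraph) (σ : AgentProtocol) (v : Fin G.n) : Prop :=
  ∃ t b, G.haltsAtWith σ v t b

/-- The execution of `σ` from `v` in `G` halts with decision `b`. -/
def PortGraph.decides (G : PortGraph) (σ : AgentProtocol) (v : Fin G.n) (b : Bool) : Prop :=
  ∃ t, G.haltsAtWith σ v t b

/-- `σ` decides the problem `P` (sets of pairs (graph, start node) closed under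
port-preserving isomorphisms): it always halts, with "yes" exactly on instances of `P`. -/
def DecidesProblem (σ : AgentProtocol) (P : (G : PortGraph) → Fin G.n → Prop) : Prop :=
  (∀ (G : PortGraph) (v : Fin G.n), G.halts σ v) ∧
  ∀ (G : PortGraph) (v : Fin G.n), (G.decides σ v true ↔ P G v)

/-- The family `σ` of protocols indexed by certificates (binary strings) verifies `P`. -/
def VerifiesProblem (σ : List Bool → AgentProtocol) (P : (G : PortGraph) → Fin G.n → Prop) :
    Prop :=
  (∀ (x : List Bool) (G : PortGraph) (v : Fin G.n), G.halts (σ x) v) ∧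
  ∀ (G : PortGraph) (v : Fin G.n),
    (P G v → ∃ x, G.decides (σ x) v true) ∧
    (¬ P G v → ∀ x, G.decides (σ x) v false)

/-- `P` is mobile agent decidable by a single agent. -/
def MAD1 (P : (G : PortGraph) → Fin G.n → Prop) : Prop := ∃ σ, DecidesProblem σ P

/-- `P` is mobile agent verifiable by a single agent. -/
def MAV1 (P : (G : PortGraph) → Fin G.n → Prop) : Prop := ∃ σ, VerifiesProblem σ P

/-- A problem closed under port-preserving isomorphisms. -/
def IsoClosed (P : (G : PortGraph) → Fin G.n → Prop) : Prop :=
  ∀ (G H : PortGraph) (e : Fin G.n ≃ Fin H.n), IsPortIso G H e →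
    ∀ v : Fin G.n, (P G v ↔ P H (e v))

/-- `G` is a path: its nodes can be arranged in a sequence so that consecutive
nodes are adjacent, the two end nodes have degree `1` and all other nodes have
degree `2`. -/
def IsPath (G : PortGraph) : Prop :=
  ∃ (_h2 : 2 ≤ G.n) (f : Fin G.n ≃ Fin G.n),
    (∀ (i : ℕ) (h : i + 1 < G.n), G.Adj (f ⟨i, by omega⟩) (f ⟨i + 1, h⟩)) ∧
    G.deg (f ⟨0, by omega⟩) = 1 ∧
    G.deg (f ⟨G.n - 1, by omega⟩) = 1 ∧
    ∀ (i : ℕ) (h : i < G.n), 0 < i → i + 1 < G.n → G.deg (f ⟨i, h⟩) = 2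

/-- The triangle with a consistent port labeling. -/
def triG : PortGraph where
  n := 3
  npos := by decide
  deg := fun _ => 2
  mtch := fun v i => if i = 0 then (v + 1, 1) else (v - 1, 0)
  mtch_lt := by
    intro v i h
    interval_cases i <;> simp
  mtch_invol := by
    intro v i h
    interval_cases i <;> simp
  no_loops := by
    intro v i h
    interval_cases i <;> revert v <;> decide
  no_multi := by
    intro v i j hi hj
    interval_cases i <;> interval_cases j <;> revert v <;> decide
  connected := by
    intro u v
    by_cases huv : u = v
    · subst huv; exact Relation.ReflTransGen.refl
    · refine Relation.ReflTransGen.single ?_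
      revert u v; decide

/-- The matching function of the path on nodes `0, …, M`. -/
def pathM (M : ℕ) (hM : 2 ≤ M) (v : Fin (M + 1)) (i : ℕ) : Fin (M + 1) × ℕ :=
  if h : v.val = M then (⟨M - 1, by omega⟩, 0)
  else if i = 0 then (⟨v.val + 1, by omega⟩, if v.val + 1 = M then 0 else 1)
  else (⟨v.val - 1, by omega⟩, 0)

/-- Degrees in the path on nodes `0, …, M`. -/
def pathDeg (M : ℕ) (v : Fin (M + 1)) : ℕ := if v.val = 0 ∨ v.val = M then 1 else 2

lemma path_up (M : ℕ) (hM : 2 ≤ M) (a : ℕ) (h : a + 1 < M + 1) :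
    ∃ i < pathDeg M ⟨a, by omega⟩, (pathM M hM ⟨a, by omega⟩ i).1 = ⟨a + 1, h⟩ := by
  refine ⟨0, by unfold pathDeg; split_ifs <;> omega, ?_⟩
  have : a ≠ M := by omega
  simp [pathM, this]

lemma path_down (M : ℕ) (hM : 2 ≤ M) (a : ℕ) (h : a + 1 < M + 1) :
    ∃ i < pathDeg M ⟨a + 1, h⟩, (pathM M hM ⟨a + 1, h⟩ i).1 = ⟨a, by omega⟩ := by
  by_cases h1 : a + 1 = M
  · refine ⟨0, by unfold pathDeg; split_ifs <;> omega, ?_⟩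
    simp [pathM, h1]; omega
  · refine ⟨1, by simp [pathDeg, h1], ?_⟩
    simp [pathM, h1]

lemma path_from_zero (M : ℕ) (hM : 2 ≤ M) (a : ℕ) (h : a < M + 1) :
    Relation.ReflTransGen (fun a b => ∃ i < pathDeg M a, (pathM M hM a i).1 = b)
      ⟨0, by omega⟩ ⟨a, h⟩ := by
  induction a with
  | zero => exact Relation.ReflTransGen.refl
  | succ a ih => exact (ih (by omega)).tail (path_up M hM a h)

lemma path_to_zero (M : ℕ) (hM : 2 ≤ M) (a : ℕ) (h : a < M + 1) :
    Relation.ReflTransGen (fun a b => ∃ i < pathDeg M a, (pathM M hM a i).1 = b)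
      ⟨a, h⟩ ⟨0, by omega⟩ := by
  induction a with
  | zero => exact Relation.ReflTransGen.refl
  | succ a ih => exact Relation.ReflTransGen.head (path_down M hM a h) (ih (by omega))

/-- The path on nodes `0, …, M`. -/
def pathG (M : ℕ) (hM : 2 ≤ M) : PortGraph where
  n := M + 1
  npos := by omega
  deg := pathDeg M
  mtch := pathM M hM
  mtch_lt := by
    rintro ⟨v, hv⟩ i h
    simp only [pathM, pathDeg] at *
    split_ifs at * <;> simp_all <;> omega
  mtch_invol := by
    rintro ⟨v, hv⟩ i h
    simp only [pathM, pathDeg] at *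
    by_cases h1 : v = M
    · have h2 : M - 1 ≠ M := by omega
      have h3 : M - 1 + 1 = M := by omega
      have h4 : i = 0 := by simp [h1] at h; exact h
      simp [h1, h2, h3, h4]
    · by_cases h2 : i = 0
      · by_cases h3 : v + 1 = M
        · have h4 : M - 1 = v := by omega
          simp [h1, h2, h3, h4]
        · simp [h1, h2, h3]
      · have h5 : v ≠ 0 := by
          intro h5
          simp [h5] at h; omega
        have h3 : v - 1 ≠ M := by omega
        have h4 : v - 1 + 1 = v := by omega
        have h6 : i = 1 := by simp [h5, h1] at h; omega
        simp [h1, h3, h4, h6]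
  no_loops := by
    rintro ⟨v, hv⟩ i h
    simp only [pathM, pathDeg] at *
    split_ifs at * <;> simp_all [Fin.ext_iff] <;> omega
  no_multi := by
    rintro ⟨v, hv⟩ i j hi hj
    simp only [pathM, pathDeg] at *
    split_ifs at * <;> simp_all [Fin.ext_iff] <;> omega
  connected := fun u v => (path_to_zero M hM u.1 u.2).trans (path_from_zero M hM v.1 v.2)

lemma pathG_isPath (M : ℕ) (hM : 2 ≤ M) : IsPath (pathG M hM) := by
  refine ⟨by simp only [pathG]; omega, Equiv.refl _, ?_, ?_, ?_, ?_⟩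
  · intro i h
    exact path_up M hM i h
  · change pathDeg M ⟨0, by omega⟩ = 1
    simp [pathDeg]
  · change pathDeg M ⟨M + 1 - 1, by omega⟩ = 1
    simp [pathDeg]
  · intro i h h0 h1
    simp only [pathG] at h h1
    have h2 : i ≠ 0 := by omega
    have h3 : i ≠ M := by omega
    change pathDeg M ⟨i, h⟩ = 2
    simp [pathDeg, h2, h3]

lemma triG_not_isPath : ¬ IsPath triG := by
  rintro ⟨_, f, _, h, _⟩
  simp [triG] at h

lemma sim (σ : AgentProtocol) (t : ℕ) (s : ℕ) (hs : s ≤ t) :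
    ((pathG (2 * t + 2) (by omega)).run σ (⟨t + 1, by simp only [pathG]; omega⟩) s).hist
      = (triG.run σ (0 : Fin 3) s).hist ∧
    ((pathG (2 * t + 2) (by omega)).run σ (⟨t + 1, by simp only [pathG]; omega⟩) s).entry
      = (triG.run σ (0 : Fin 3) s).entry ∧
    t + 1 ≤ ((pathG (2 * t + 2) (by omega)).run σ
      (⟨t + 1, by simp only [pathG]; omega⟩) s).pos.val + s ∧
    ((pathG (2 * t + 2) (by omega)).run σ (⟨t + 1, by simp only [pathG]; omega⟩) s).pos.val
      ≤ t + 1 + s := by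
  induction s with
  | zero =>
    have : t + 1 ≠ 2 * t + 2 := by omega
    simp [PortGraph.run, pathG, pathDeg, triG]
    omega
  | succ s ih =>
    obtain ⟨h1, h2, h3, h4⟩ := ih (by omega)
    simp only [PortGraph.run]
    generalize (pathG (2 * t + 2) (by omega)).run σ
      (⟨t + 1, by simp only [pathG]; omega⟩) s = c at *
    generalize triG.run σ (0 : Fin 3) s = d at *
    obtain ⟨⟨p, hp⟩, e, hi⟩ := c
    obtain ⟨q, e', hi'⟩ := d
    simp only at h1 h2 h3 h4
    subst h1 h2
    have a1 : p ≠ 0 := by omega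
    have a2 : p ≠ 2 * t + 2 := by omega
    have a3 : p + 1 ≠ 2 * t + 2 := by omega
    have a4 : p - 1 ≠ 0 := by omega
    have a5 : p - 1 ≠ 2 * t + 2 := by omega
    have a6 : p ≠ 2 * t + 1 := by omega
    simp only [PortGraph.stepAgent]
    cases σ hi with
    | halt b => simp [pathG, pathDeg, triG, a1, a2]; omega
    | move m =>
      by_cases hm : 1 ≤ m ∧ m - 1 < 2
      · obtain rfl | rfl : m = 1 ∨ m = 2 := by omega
        · simp [pathG, pathDeg, pathM, triG, a1, a2, a6]; omega
        · simp [pathG, pathDeg, pathM, triG, a1, a2, a5]; omega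
      · have hm2 : ¬ (1 ≤ m ∧ m - 1 < (pathG (2 * t + 2) (by omega)).deg ⟨p, hp⟩) := by
          have : (pathG (2 * t + 2) (by omega)).deg ⟨p, hp⟩ = 2 := by
            simp [pathG, pathDeg, a1, a2]
          rw [this]; exact hm
        have hm3 : ¬ (1 ≤ m ∧ m - 1 < triG.deg q) := hm
        simp only [if_neg hm2, if_neg hm3]
        simp [pathG, pathDeg, triG, a1, a2]; omega

/-- No single-agent protocol always halts and halts with "yes" exactly
on the port-labeled graphs that are paths. -/
theorem path_not_single_agent_decidable :
    ¬ ∃ σ : AgentProtocol,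
        (∀ (G : PortGraph) (v : Fin G.n), G.halts σ v) ∧
        ∀ (G : PortGraph) (v : Fin G.n), (G.decides σ v true ↔ IsPath G) := by
  rintro ⟨σ, hh, hd⟩
  obtain ⟨t, b, hb⟩ := hh triG (0 : Fin 3)
  cases b with
  | true => exact triG_not_isPath ((hd triG (0 : Fin 3)).1 ⟨t, hb⟩)
  | false =>
    obtain ⟨t', h1, h2⟩ := (hd (pathG (2 * t + 2) (by omega))
      (⟨t + 1, by simp only [pathG]; omega⟩)).2 (pathG_isPath _ _)
    obtain ⟨g1, g2⟩ := hb
    unfold PortGraph.actAt at *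
    rcases lt_or_ge t t' with h | h
    · refine h2 t h false ?_
      rw [(sim σ t t le_rfl).1]; exact g1
    · rw [(sim σ t t' h).1] at h1
      rcases h.lt_or_eq with h | h
      · exact g2 t' h _ h1
      · subst h
        rw [g1] at h1
        simp at h1
end

section
/- Let Π be any set of pairs (G, v), where G is a port-labeled graph and v a node of G, closed under port-preserving isomorphism. Then Π is single-agent decidable if and only if both Π and its complement are single-agent verifiable; i.e., MAV₁ ∩ co-MAV₁ = MAD₁. -/
/-- Memory of the dovetailing agent. -/
inductive DMem : Type
  | start
  | fwd (k : ℕ) (h : List Obs) (st : List ℕ)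
  | bwd (k : ℕ) (st : List ℕ)

/-- Action of the dovetailing agent in a given memory state. -/
def dAct (ρ : ℕ → AgentProtocol) (dec : ℕ → Bool) : DMem → AgentAction
  | .start => .move 0
  | .fwd k h _ =>
      match ρ k h with
      | .halt true => .halt (dec k)
      | .halt false => .move 0
      | .move p => .move p
  | .bwd _ [] => .move 0
  | .bwd _ (j :: _) => .move j

/-- Memory update of the dovetailing agent after an observation. -/
def dUpd (ρ : ℕ → AgentProtocol) : DMem → Obs → DMem
  | .start, o => .fwd 0 [(o.1, 0)] []
  | .fwd k h st, o =>
      match ρ k h with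
      | .halt _ => .bwd k st
      | .move p =>
          if 1 ≤ p ∧ p - 1 < (h.getLastD (0, 0)).1 then .fwd k (h ++ [o]) (o.2 :: st)
          else .fwd k (h ++ [h.getLastD (0, 0)]) st
  | .bwd k [], o => .fwd (k + 1) [(o.1, 0)] []
  | .bwd k (_ :: st), _ => .bwd k st

/-- The dovetailing protocol. -/
def dProt (ρ : ℕ → AgentProtocol) (dec : ℕ → Bool) : AgentProtocol :=
  fun h => dAct ρ dec (h.foldl (dUpd ρ) .start)

/-- Following the ports of the stack leads from `u` to `v`. -/
def leadsBack (G : PortGraph) (v : Fin G.n) : Fin G.n → List ℕ → Prop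
  | u, [] => u = v
  | u, j :: st => 1 ≤ j ∧ j - 1 < G.deg u ∧ leadsBack G v (G.mtch u (j - 1)).1 st

lemma run_last (G : PortGraph) (σ : AgentProtocol) (v : Fin G.n) (t : ℕ) :
    (G.run σ v t).hist.getLastD (0, 0) = (G.deg (G.run σ v t).pos, (G.run σ v t).entry) := by
  cases t with
  | zero => simp [PortGraph.run]
  | succ t => simp [PortGraph.run, PortGraph.stepAgent]

section
variable (ρ : ℕ → AgentProtocol) (dec : ℕ → Bool) (G : PortGraph) (v : Fin G.n)

/-- Memory of the dovetailing agent at time `t`. -/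
def dMem (t : ℕ) : DMem := ((G.run (dProt ρ dec) v t).hist).foldl (dUpd ρ) .start

/-- Simulating round `i` of protocol `k` at time `t`. -/
def FwdAt (k i t : ℕ) : Prop :=
  ∃ st, dMem ρ dec G v t = .fwd k (G.run (ρ k) v i).hist st ∧
    (G.run (dProt ρ dec) v t).pos = (G.run (ρ k) v i).pos ∧
    leadsBack G v (G.run (ρ k) v i).pos st

/-- Backtracking after protocol `k` at time `t` with stack `st`. -/
def BwdAt (k : ℕ) (st : List ℕ) (t : ℕ) : Prop :=
  dMem ρ dec G v t = .bwd k st ∧ leadsBack G v (G.run (dProt ρ dec) v t).pos st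

lemma actAt_d (t : ℕ) : G.actAt (dProt ρ dec) v t = dAct ρ dec (dMem ρ dec G v t) := rfl

lemma dMem_succ (t : ℕ) : dMem ρ dec G v (t + 1) = dUpd ρ (dMem ρ dec G v t)
    (G.deg (G.run (dProt ρ dec) v (t + 1)).pos, (G.run (dProt ρ dec) v (t + 1)).entry) := by
  simp [dMem, PortGraph.run, PortGraph.stepAgent, List.foldl_append]

lemma pos_stay (σ : AgentProtocol) (t : ℕ)
    (h : (∃ b, G.actAt σ v t = .halt b) ∨
      ∃ p, G.actAt σ v t = .move p ∧ ¬ (1 ≤ p ∧ p - 1 < G.deg (G.run σ v t).pos)) :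
    (G.run σ v (t + 1)).pos = (G.run σ v t).pos ∧
    (G.run σ v (t + 1)).entry = (G.run σ v t).entry := by
  unfold PortGraph.actAt at h
  rcases h with ⟨b, h⟩ | ⟨p, h, hp⟩
  · simp [PortGraph.run, PortGraph.stepAgent, h]
  · simp only [PortGraph.run, PortGraph.stepAgent, h, if_neg hp, and_self]

lemma pos_move (σ : AgentProtocol) (t p : ℕ) (h : G.actAt σ v t = .move p)
    (hp : 1 ≤ p ∧ p - 1 < G.deg (G.run σ v t).pos) :
    (G.run σ v (t + 1)).pos = (G.mtch (G.run σ v t).pos (p - 1)).1 ∧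
    (G.run σ v (t + 1)).entry = (G.mtch (G.run σ v t).pos (p - 1)).2 + 1 := by
  unfold PortGraph.actAt at h
  simp only [PortGraph.run, PortGraph.stepAgent, h, if_pos hp, and_self]

lemma run_hist_succ (σ : AgentProtocol) (t : ℕ) :
    (G.run σ v (t + 1)).hist = (G.run σ v t).hist ++
      [(G.deg (G.run σ v (t + 1)).pos, (G.run σ v (t + 1)).entry)] := by
  simp [PortGraph.run, PortGraph.stepAgent]

lemma fwd_zero : FwdAt ρ dec G v 0 0 0 :=
  ⟨[], by simp [dMem, PortGraph.run, dUpd], rfl, rfl⟩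

lemma fwd_step {k i t p : ℕ} (h : FwdAt ρ dec G v k i t)
    (hp : G.actAt (ρ k) v i = .move p) : FwdAt ρ dec G v k (i + 1) (t + 1) := by
  obtain ⟨st, hm, hpos, hb⟩ := h
  have hp' : ρ k (G.run (ρ k) v i).hist = .move p := hp
  have ha : G.actAt (dProt ρ dec) v t = .move p := by
    rw [actAt_d, hm]; simp [dAct, hp']
  have hs := dMem_succ ρ dec G v t
  rw [hm] at hs
  simp only [dUpd, hp', run_last] at hs
  by_cases hl : 1 ≤ p ∧ p - 1 < G.deg (G.run (ρ k) v i).pos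
  · rw [if_pos hl] at hs
    have h1 := pos_move G v (ρ k) i p hp hl
    have h2 := pos_move G v (dProt ρ dec) t p ha (by rw [hpos]; exact hl)
    rw [hpos] at h2
    refine ⟨(G.run (dProt ρ dec) v (t + 1)).entry :: st, ?_, h2.1.trans h1.1.symm, ?_⟩
    · rw [hs, run_hist_succ, h1.1, h1.2, h2.1, h2.2]
    · rw [h1.1, h2.2]
      refine ⟨by omega, ?_, ?_⟩
      · simpa using G.mtch_lt _ _ hl.2
      · simpa [G.mtch_invol _ _ hl.2] using hb
  · rw [if_neg hl] at hs
    have h1 := pos_stay G v (ρ k) i (Or.inr ⟨p, hp, hl⟩)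
    have h2 := pos_stay G v (dProt ρ dec) t (Or.inr ⟨p, ha, by rw [hpos]; exact hl⟩)
    refine ⟨st, ?_, ?_, ?_⟩
    · rw [hs, run_hist_succ, h1.1, h1.2]
    · rw [h1.1, h2.1, hpos]
    · rw [h1.1]; exact hb

lemma fwd_halt {k i t : ℕ} {b : Bool} (h : FwdAt ρ dec G v k i t)
    (hp : G.actAt (ρ k) v i = .halt b) : ∃ st, BwdAt ρ dec G v k st (t + 1) := by
  obtain ⟨st, hm, hpos, hb⟩ := h
  have hp' : ρ k (G.run (ρ k) v i).hist = .halt b := hp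
  have ha : (∃ b, G.actAt (dProt ρ dec) v t = .halt b) ∨
      ∃ p, G.actAt (dProt ρ dec) v t = .move p ∧
        ¬ (1 ≤ p ∧ p - 1 < G.deg (G.run (dProt ρ dec) v t).pos) := by
    rw [actAt_d, hm]
    cases b <;> simp [dAct, hp']
  have h2 := pos_stay G v (dProt ρ dec) t ha
  refine ⟨st, ?_, ?_⟩
  · rw [dMem_succ, hm]; simp [dUpd, hp']
  · rw [h2.1, hpos]; exact hb

lemma bwd_nil {k t : ℕ} (h : BwdAt ρ dec G v k [] t) : FwdAt ρ dec G v (k + 1) 0 (t + 1) := by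
  obtain ⟨hm, hb⟩ := h
  have h2 := pos_stay G v (dProt ρ dec) t (Or.inr ⟨0, by rw [actAt_d, hm]; rfl, by simp⟩)
  have hb' : (G.run (dProt ρ dec) v t).pos = v := hb
  refine ⟨[], ?_, ?_, rfl⟩
  · rw [dMem_succ, hm, h2.1, hb']; rfl
  · rw [h2.1, hb']; rfl

lemma bwd_cons {k t j : ℕ} {st : List ℕ} (h : BwdAt ρ dec G v k (j :: st) t) :
    BwdAt ρ dec G v k st (t + 1) := by
  obtain ⟨hm, h1, h2, hb⟩ := h
  have h2 := pos_move G v (dProt ρ dec) t j (by rw [actAt_d, hm]; rfl) ⟨h1, h2⟩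
  refine ⟨?_, ?_⟩
  · rw [dMem_succ, hm]; rfl
  · rw [h2.1]; exact hb

lemma bwd_finish {k : ℕ} (st : List ℕ) : ∀ t, BwdAt ρ dec G v k st t →
    ∃ t', FwdAt ρ dec G v (k + 1) 0 t' := by
  induction st with
  | nil => exact fun t h => ⟨_, bwd_nil ρ dec G v h⟩
  | cons j st ih => exact fun t h => ih _ (bwd_cons ρ dec G v h)

lemma fwd_reach {k t i : ℕ} (h : FwdAt ρ dec G v k 0 t)
    (hi : ∀ s < i, ∀ b, G.actAt (ρ k) v s ≠ .halt b) : FwdAt ρ dec G v k i (t + i) := by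
  induction i with
  | zero => exact h
  | succ i ih =>
    have h1 := ih fun s hs => hi s (by omega)
    cases hp : G.actAt (ρ k) v i with
    | halt b => exact absurd hp (hi i (by omega) b)
    | move p => exact fwd_step ρ dec G v h1 hp

lemma fwd_all (hh : ∀ k, G.halts (ρ k) v) (k : ℕ) : ∃ t, FwdAt ρ dec G v k 0 t := by
  induction k with
  | zero => exact ⟨0, fwd_zero ρ dec G v⟩
  | succ k ih =>
    obtain ⟨t, ht⟩ := ih
    obtain ⟨i, b, hb, hi⟩ := hh k
    obtain ⟨st, hst⟩ := fwd_halt ρ dec G v (fwd_reach ρ dec G v ht hi) hb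
    exact bwd_finish ρ dec G v st _ hst

lemma d_inv (t : ℕ) :
    (∃ k i, FwdAt ρ dec G v k i t ∧ ∀ s < i, ∀ b, G.actAt (ρ k) v s ≠ .halt b) ∨
    ∃ k st, BwdAt ρ dec G v k st t := by
  induction t with
  | zero => exact Or.inl ⟨0, 0, fwd_zero ρ dec G v, by simp⟩
  | succ t ih =>
    rcases ih with ⟨k, i, h, hi⟩ | ⟨k, st, h⟩
    · cases hp : G.actAt (ρ k) v i with
      | halt b => exact Or.inr ⟨k, fwd_halt ρ dec G v h hp⟩
      | move p =>
        refine Or.inl ⟨k, i + 1, fwd_step ρ dec G v h hp, fun s hs b => ?_⟩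
        rcases Nat.lt_succ_iff_lt_or_eq.mp hs with hs | rfl
        · exact hi s hs b
        · simp [hp]
    · cases st with
      | nil => exact Or.inl ⟨k + 1, 0, bwd_nil ρ dec G v h, by simp⟩
      | cons j st => exact Or.inr ⟨k, st, bwd_cons ρ dec G v h⟩

lemma d_sound {t : ℕ} {b : Bool} (h : G.actAt (dProt ρ dec) v t = .halt b) :
    ∃ k, G.decides (ρ k) v true ∧ dec k = b := by
  rcases d_inv ρ dec G v t with ⟨k, i, ⟨st, hm, -, -⟩, hi⟩ | ⟨k, st, hm, -⟩
  · rw [actAt_d, hm] at h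
    cases hp : ρ k (G.run (ρ k) v i).hist with
    | move p => simp [dAct, hp] at h
    | halt c =>
      cases c with
      | false => simp [dAct, hp] at h
      | true =>
        simp [dAct, hp] at h
        exact ⟨k, ⟨i, hp, hi⟩, h⟩
  · rw [actAt_d, hm] at h
    cases st <;> simp [dAct] at h

lemma d_live (hh : ∀ k, G.halts (ρ k) v) {k : ℕ} (hk : G.decides (ρ k) v true) :
    ∃ t b, G.actAt (dProt ρ dec) v t = .halt b := by
  obtain ⟨t, ht⟩ := fwd_all ρ dec G v hh k
  obtain ⟨i, hb, hi⟩ := hk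
  obtain ⟨st, hm, -, -⟩ := fwd_reach ρ dec G v ht hi
  refine ⟨t + i, dec k, ?_⟩
  have hb' : ρ k (G.run (ρ k) v i).hist = .halt true := hb
  rw [actAt_d, hm]; simp [dAct, hb']

end

lemma decides_unique {G : PortGraph} {σ : AgentProtocol} {v : Fin G.n} {b c : Bool}
    (hb : G.decides σ v b) (hc : G.decides σ v c) : b = c := by
  obtain ⟨s, hs, hs'⟩ := hb
  obtain ⟨t, ht, ht'⟩ := hc
  rcases lt_trichotomy s t with h | rfl | h
  · exact absurd hs (ht' s h b)
  · rw [hs] at ht; simpa using ht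
  · exact absurd ht (hs' t h c)

lemma halts_of_act {G : PortGraph} {σ : AgentProtocol} {v : Fin G.n}
    (h : ∃ t b, G.actAt σ v t = .halt b) : G.halts σ v := by
  classical
  obtain ⟨b, hb⟩ := Nat.find_spec h
  exact ⟨Nat.find h, b, hb, fun s hs b' hb' => Nat.find_min h hs ⟨b', hb'⟩⟩

/-- Negate the decision. -/
def flipAct : AgentAction → AgentAction
  | .halt b => .halt (!b)
  | .move p => .move p

lemma flip_run (G : PortGraph) (σ : AgentProtocol) (v : Fin G.n) (t : ℕ) :
    G.run (fun h => flipAct (σ h)) v t = G.run σ v t := by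
  induction t with
  | zero => rfl
  | succ t ih =>
    simp only [PortGraph.run, ih, PortGraph.stepAgent]
    cases σ (G.run σ v t).hist <;> rfl

lemma flip_decides {G : PortGraph} {σ : AgentProtocol} {v : Fin G.n} {b : Bool}
    (h : G.decides σ v b) : G.decides (fun h => flipAct (σ h)) v (!b) := by
  obtain ⟨t, ht, ht'⟩ := h
  refine ⟨t, ?_, fun s hs b' hb' => ?_⟩
  · simp only [PortGraph.actAt, flip_run] at *
    rw [ht]; rfl
  · have h1 := ht' s hs (!b')
    simp only [PortGraph.actAt, flip_run] at *
    cases h2 : σ (G.run σ v s).hist with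
    | move p => rw [h2] at hb'; simp [flipAct] at hb'
    | halt c =>
      rw [h2] at hb' h1
      simp [flipAct] at hb'
      subst hb'
      simp at h1

/-- For a problem closed under port-preserving isomorphisms,
single-agent decidability is equivalent to single-agent verifiability of the problem and
of its complement: `MAV₁ ∩ co-MAV₁ = MAD₁`. -/
theorem MAD1_iff_MAV1_and_coMAV1 (P : (G : PortGraph) → Fin G.n → Prop)
    (hP : IsoClosed P) :
    MAD1 P ↔ (MAV1 P ∧ MAV1 fun G v => ¬ P G v) := by
  constructor
  · rintro ⟨σ, hh, hd⟩
    have key : ∀ G v, ¬ P G v → PortGraph.decides G σ v false := by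
      intro G v hn
      obtain ⟨t, b, h⟩ := hh G v
      cases b with
      | false => exact ⟨t, h⟩
      | true => exact absurd ((hd G v).1 ⟨t, h⟩) hn
    refine ⟨⟨fun _ => σ, fun _ => hh, fun G v => ⟨fun hp => ⟨[], (hd G v).2 hp⟩,
      fun hn _ => key G v hn⟩⟩, ⟨fun _ h => flipAct (σ h), ?_, fun G v => ⟨fun hn => ?_, ?_⟩⟩⟩
    · intro _ G v
      obtain ⟨t, b, h⟩ := hh G v
      obtain ⟨t', h'⟩ := flip_decides ⟨t, h⟩
      exact ⟨t', _, h'⟩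
    · exact ⟨[], flip_decides (key G v hn)⟩
    · intro hp _
      exact flip_decides ((hd G v).2 (not_not.mp hp))
  · rintro ⟨⟨σ, hσ, hσ'⟩, ⟨τ, hτ, hτ'⟩⟩
    obtain ⟨e, he⟩ := exists_surjective_nat (Bool × List Bool)
    let ρ : ℕ → AgentProtocol := fun k => if (e k).1 = true then σ (e k).2 else τ (e k).2
    let dec : ℕ → Bool := fun k => (e k).1
    have hh : ∀ (G : PortGraph) (v : Fin G.n) (k : ℕ), G.halts (ρ k) v := by
      intro G v k
      by_cases h : (e k).1 = true
      · simpa [ρ, h] using hσ _ G v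
      · simpa [ρ, h] using hτ _ G v
    have hs : ∀ (G : PortGraph) (v : Fin G.n) (k : ℕ), G.decides (ρ k) v true →
        (dec k = true ↔ P G v) := by
      intro G v k hk
      by_cases h : (e k).1 = true
      · simp only [ρ, h, if_true] at hk
        simp only [dec, h, true_iff]
        by_contra hn
        exact absurd (decides_unique hk ((hσ' G v).2 hn _)) (by decide)
      · simp only [ρ, if_neg h] at hk
        refine ⟨fun h' => absurd h' h, fun hp => ?_⟩
        exact absurd (decides_unique hk ((hτ' G v).2 (not_not.mpr hp) _)) (by decide)
    have hex : ∀ (G : PortGraph) (v : Fin G.n), ∃ k, G.decides (ρ k) v true := by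
      intro G v
      by_cases hp : P G v
      · obtain ⟨x, hx⟩ := (hσ' G v).1 hp
        obtain ⟨k, hk⟩ := he (true, x)
        exact ⟨k, by simpa [ρ, hk] using hx⟩
      · obtain ⟨x, hx⟩ := (hτ' G v).1 hp
        obtain ⟨k, hk⟩ := he (false, x)
        exact ⟨k, by simpa [ρ, hk] using hx⟩
    have hhalt : ∀ (G : PortGraph) (v : Fin G.n), G.halts (dProt ρ dec) v := by
      intro G v
      obtain ⟨k, hk⟩ := hex G v
      exact halts_of_act (d_live ρ dec G v (hh G v) hk)
    have hsound : ∀ (G : PortGraph) (v : Fin G.n) (b : Bool), G.decides (dProt ρ dec) v b →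
        (b = true ↔ P G v) := by
      rintro G v b ⟨t, ht, -⟩
      obtain ⟨k, hk, rfl⟩ := d_sound ρ dec G v ht
      exact hs G v k hk
    refine ⟨dProt ρ dec, hhalt, fun G v => ⟨fun h => (hsound G v true h).1 rfl, fun hp => ?_⟩⟩
    obtain ⟨t, b, h⟩ := hhalt G v
    have hb : b = true := (hsound G v b ⟨t, h⟩).2 hp
    subst hb
    exact ⟨t, h⟩
end

section
/- There exist two port-labeled graphs G and H with the same number of nodes, a node u of G and a node v of H with V^t(u) = V^t(v) for every t ≥ 0 (hence G and H have the same quotient), such that there is no port-preserving isomorphism between G and H. -/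
/-- A 3-regular port graph on six nodes in which each edge has the same port number
at both endpoints, from a neighbour function. -/
def cubicGraph (f : Fin 6 → ℕ → Fin 6)
    (h1 : ∀ v, ∀ i < 3, f (f v i) i = v)
    (h2 : ∀ v, ∀ i < 3, f v i ≠ v)
    (h3 : ∀ v, ∀ i < 3, ∀ j < 3, f v i = f v j → i = j)
    (h4 : ∀ u v, u = v ∨ (∃ i < 3, f u i = v) ∨ ∃ i < 3, ∃ j < 3, f (f u i) j = v) :
    PortGraph where
  n := 6
  npos := by norm_num
  deg := fun _ => 3
  mtch := fun v i => (f v i, i)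
  mtch_lt := fun _ _ h => h
  mtch_invol := fun v i h => by
    show (f (f v i) i, i) = (v, i)
    rw [h1 v i h]
  no_loops := h2
  no_multi := fun v i j hi hj h => h3 v i hi j hj h
  connected := fun u v => by
    rcases h4 u v with h | ⟨i, hi, h⟩ | ⟨i, hi, j, hj, h⟩
    · subst h
      exact Relation.ReflTransGen.refl
    · exact Relation.ReflTransGen.single ⟨i, hi, h⟩
    · exact (Relation.ReflTransGen.single ⟨i, hi, rfl⟩).tail ⟨j, hj, h⟩

/-- Neighbours in the triangular prism (triangles `0,1,2` and `3,4,5`). -/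
def prismNbr (v : Fin 6) (i : ℕ) : Fin 6 :=
  match i with
  | 0 => ![1, 0, 5, 4, 3, 2] v
  | 1 => ![3, 2, 1, 0, 5, 4] v
  | _ => ![2, 4, 0, 5, 1, 3] v

/-- Neighbours in the complete bipartite graph with parts `0,1,2` and `3,4,5`. -/
def bipNbr (v : Fin 6) (i : ℕ) : Fin 6 :=
  match i with
  | 0 => ![3, 4, 5, 0, 1, 2] v
  | 1 => ![4, 5, 3, 2, 0, 1] v
  | _ => ![5, 3, 4, 1, 2, 0] v

/-- The triangular prism. -/
def prismGraph : PortGraph :=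
  cubicGraph prismNbr (by decide) (by decide) (by decide) (by decide)

/-- The complete bipartite graph. -/
def bipGraph : PortGraph :=
  cubicGraph bipNbr (by decide) (by decide) (by decide) (by decide)

theorem view_prism_bip (t : ℕ) : ∀ (u : Fin 6) (v : Fin 6),
    prismGraph.view t u = bipGraph.view t v := by
  induction t with
  | zero => intro u v; rfl
  | succ t ih =>
    intro u v
    show ViewTree.node ((List.range 3).map fun i =>
        (i + 1, i + 1, prismGraph.view t (prismNbr u i))) =
      ViewTree.node ((List.range 3).map fun i =>
        (i + 1, i + 1, bipGraph.view t (bipNbr v i)))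
    congr 2
    funext i
    rw [ih (prismNbr u i) (bipNbr v i)]

/-- There are two non-isomorphic port-labeled graphs with the same
number of nodes containing nodes with equal views (hence with the same quotient). -/
theorem exists_view_eq_not_isomorphic :
    ∃ (G H : PortGraph) (u : Fin G.n) (v : Fin H.n),
      G.n = H.n ∧ (∀ t : ℕ, G.view t u = H.view t v) ∧
      ¬ ∃ e : Fin G.n ≃ Fin H.n, IsPortIso G H e := by
  refine ⟨prismGraph, bipGraph, (0 : Fin 6), (0 : Fin 6), rfl,
    fun t => view_prism_bip t _ _, ?_⟩
  rintro ⟨e, -, he⟩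
  have key : ∀ (v : Fin 6) (i : ℕ), i < 3 →
      bipNbr (e v : Fin 6) i = (e (prismNbr v i) : Fin 6) :=
    fun v i hi => congrArg Prod.fst (he v i hi)
  have k0 := key 0 0 (by norm_num)
  have k1 := key 1 1 (by norm_num)
  have k2 := key 2 2 (by norm_num)
  have hw : ∀ w : Fin 6, bipNbr (bipNbr (bipNbr w 0) 1) 2 ≠ w := by decide
  apply hw (e (0 : Fin 6))
  rw [k0]
  show bipNbr (bipNbr (e (1 : Fin 6)) 1) 2 = _
  rw [k1]
  exact k2
end

section
/- There exists a computable function τ : ℕ × ℕ → ℕ (one may take τ(n,i) = 2(i+1)·n^n) and a family of single-agent protocols σ_{n,i}, for n ≥ 1 and identities i ≥ 1, such that for every port-labeled graph G with n nodes: (a) for every start node, the execution of σ_{n,i} performs no halting before round τ(n,i), is located at its start node at round τ(n,i), and remains there in all subsequent rounds; and (b) for any two distinct identities i ≠ j and any start nodes u and v, there is a round r ≤ min(τ(n,i), τ(n,j)) at which the execution of σ_{n,i} from u and the execution of σ_{n,j} from v occupy the same node (the two agents meet). -/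
/-- Actions of a (non-deciding) mobile agent: stay, halt, or move through port `p`. -/
inductive RAction : Type
  | stay
  | halt
  | move (p : ℕ)

abbrev RProtocol : Type := List Obs → RAction

structure RState (G : PortGraph) where
  pos : Fin G.n
  entry : ℕ
  hist : List Obs

def PortGraph.stepR (G : PortGraph) (σ : RProtocol) (c : RState G) : RState G :=
  let next : Fin G.n × ℕ :=
    match σ c.hist with
    | .stay => (c.pos, c.entry)
    | .halt => (c.pos, c.entry)
    | .move p =>
        if 1 ≤ p ∧ p - 1 < G.deg c.pos then
          ((G.mtch c.pos (p - 1)).1, (G.mtch c.pos (p - 1)).2 + 1)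
        else (c.pos, c.entry)
  ⟨next.1, next.2, c.hist ++ [(G.deg next.1, next.2)]⟩

def PortGraph.runR (G : PortGraph) (σ : RProtocol) (v : Fin G.n) : ℕ → RState G
  | 0 => ⟨v, 0, [(G.deg v, 0)]⟩
  | t + 1 => G.stepR σ (G.runR σ v t)

def PortGraph.actR (G : PortGraph) (σ : RProtocol) (v : Fin G.n) (t : ℕ) : RAction :=
  σ (G.runR σ v t).hist

namespace Rdv

/-- Length of one exploration phase. -/
def T (n : ℕ) : ℕ := n ^ n * (2 * n)

/-- Base-`n` digit number `k` of `b`. -/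
def dig (n b k : ℕ) : ℕ := b / n ^ k % n

/-- The protocol. -/
def prot (n i : ℕ) : RProtocol := fun h =>
  let t := h.length - 1
  if t < i * T n ∨ i * T n + T n ≤ t then RAction.stay else
    let b := (t - i * T n) / (2 * n)
    let k := (t - i * T n) % (2 * n)
    let a := i * T n + b * (2 * n)
    if k < n then RAction.move (dig n b k + 1)
    else if dig n b (2 * n - 1 - k) < (h.getD (a + (2 * n - 1 - k)) (0, 0)).1 then
      RAction.move (h.getD (a + (2 * n - 1 - k) + 1) (0, 0)).2
    else RAction.stay

theorem exists_digits (n : ℕ) (m : ℕ) : ∀ (f : ℕ → ℕ), (∀ k, f k < n) →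
    ∃ b < n ^ m, ∀ k < m, dig n b k = f k := by
  induction m with
  | zero => intro f _; exact ⟨0, by simp, by simp⟩
  | succ m ih =>
    intro f hf
    obtain ⟨b, hb, hd⟩ := ih (fun k => f (k + 1)) (fun k => hf _)
    have h0 := hf 0
    have hn : 0 < n := by omega
    refine ⟨f 0 + n * b, ?_, ?_⟩
    · rw [pow_succ]
      nlinarith
    · intro k hk
      cases k with
      | zero => simp [dig, Nat.mod_eq_of_lt h0]
      | succ k =>
        have := hd k (by omega)
        rw [← this]
        unfold dig
        rw [pow_succ', ← Nat.div_div_eq_div_mul, Nat.add_mul_div_left _ _ hn,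
          Nat.div_eq_of_lt h0, zero_add]

variable (G : PortGraph) (σ : RProtocol) (u : Fin G.n)

theorem deg_le (v : Fin G.n) : G.deg v ≤ G.n := by
  have : Function.Injective (fun i : Fin (G.deg v) => (G.mtch v i).1) := by
    intro i j h
    exact Fin.ext (G.no_multi v i j i.2 j.2 h)
  simpa using Fintype.card_le_of_injective _ this

theorem hist_length (t : ℕ) : (G.runR σ u t).hist.length = t + 1 := by
  induction t with
  | zero => rfl
  | succ t ih => simp [PortGraph.runR, PortGraph.stepR, ih]

theorem hist_getD (t s : ℕ) (h : s ≤ t) : (G.runR σ u t).hist.getD s (0, 0) =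
    (G.deg (G.runR σ u s).pos, (G.runR σ u s).entry) := by
  induction t with
  | zero =>
    obtain rfl : s = 0 := by omega
    rfl
  | succ t ih =>
    have hl := hist_length G σ u t
    rcases Nat.lt_or_ge t s with h1 | h1
    · obtain rfl : s = t + 1 := by omega
      simp only [PortGraph.runR, PortGraph.stepR]
      rw [List.getD_append_right _ _ _ _ (by omega), hl]
      simp
    · rw [← ih h1]
      simp only [PortGraph.runR, PortGraph.stepR]
      rw [List.getD_append _ _ _ _ (by omega)]

theorem run_stay (t : ℕ) (h : σ (G.runR σ u t).hist = RAction.stay) :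
    (G.runR σ u (t + 1)).pos = (G.runR σ u t).pos := by
  simp [PortGraph.runR, PortGraph.stepR, h]

theorem run_move (t p : ℕ) (h : σ (G.runR σ u t).hist = RAction.move (p + 1))
    (hp : p < G.deg (G.runR σ u t).pos) :
    (G.runR σ u (t + 1)).pos = (G.mtch (G.runR σ u t).pos p).1 ∧
    (G.runR σ u (t + 1)).entry = (G.mtch (G.runR σ u t).pos p).2 + 1 := by
  simp [PortGraph.runR, PortGraph.stepR, h, hp]

theorem run_bad (t p : ℕ) (h : σ (G.runR σ u t).hist = RAction.move (p + 1))
    (hp : ¬ p < G.deg (G.runR σ u t).pos) :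
    (G.runR σ u (t + 1)).pos = (G.runR σ u t).pos := by
  simp only [PortGraph.runR, PortGraph.stepR, h]
  rw [if_neg (by simpa using hp)]

theorem prot_ne_halt (n i : ℕ) (h : List Obs) : prot n i h ≠ RAction.halt := by
  unfold prot
  dsimp only
  split_ifs <;> simp

variable (i : ℕ)

theorem act_wait (t : ℕ) (ht : t < i * T G.n ∨ i * T G.n + T G.n ≤ t) :
    prot G.n i (G.runR (prot G.n i) u t).hist = RAction.stay := by
  generalize hs : (G.runR (prot G.n i) u t).hist = h
  have hl : h.length = t + 1 := by rw [← hs]; exact hist_length ..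
  unfold prot
  simp only [hl, Nat.add_sub_cancel, if_pos ht]

theorem block_lt {n b k : ℕ} (hb : b < n ^ n) (hk : k < 2 * n) :
    b * (2 * n) + k < T n := by
  unfold T
  nlinarith

theorem act_fwd (b k : ℕ) (hb : b < G.n ^ G.n) (hk : k < G.n) :
    prot G.n i (G.runR (prot G.n i) u (i * T G.n + b * (2 * G.n) + k)).hist =
      RAction.move (dig G.n b k + 1) := by
  have hlt := block_lt (n := G.n) (k := k) hb (by omega)
  generalize hs : (G.runR (prot G.n i) u (i * T G.n + b * (2 * G.n) + k)).hist = h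
  have hl : h.length = i * T G.n + b * (2 * G.n) + k + 1 := by rw [← hs]; exact hist_length ..
  have h1 : i * T G.n + b * (2 * G.n) + k - i * T G.n = k + b * (2 * G.n) := by omega
  have h2 : (k + b * (2 * G.n)) / (2 * G.n) = b := by
    rw [Nat.add_mul_div_right _ _ (by omega), Nat.div_eq_of_lt (by omega), zero_add]
  have h3 : (k + b * (2 * G.n)) % (2 * G.n) = k := by
    rw [Nat.add_mul_mod_self_right, Nat.mod_eq_of_lt (by omega)]
  unfold prot
  simp only [hl, Nat.add_sub_cancel, h1, h2, h3]
  rw [if_neg (by omega), if_pos hk]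

/-- Backward action undoing forward step `k`. -/
theorem act_bwd (b k : ℕ) (hb : b < G.n ^ G.n) (hk : k < G.n) :
    prot G.n i (G.runR (prot G.n i) u (i * T G.n + b * (2 * G.n) + (2 * G.n - 1 - k))).hist =
      if dig G.n b k < G.deg (G.runR (prot G.n i) u (i * T G.n + b * (2 * G.n) + k)).pos then
        RAction.move (G.runR (prot G.n i) u (i * T G.n + b * (2 * G.n) + k + 1)).entry
      else RAction.stay := by
  have hlt := block_lt (n := G.n) (k := 2 * G.n - 1 - k) hb (by omega)
  have g1 := hist_getD G (prot G.n i) u (i * T G.n + b * (2 * G.n) + (2 * G.n - 1 - k))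
    (i * T G.n + b * (2 * G.n) + k) (by omega)
  have g2 := hist_getD G (prot G.n i) u (i * T G.n + b * (2 * G.n) + (2 * G.n - 1 - k))
    (i * T G.n + b * (2 * G.n) + k + 1) (by omega)
  generalize hs : (G.runR (prot G.n i) u
    (i * T G.n + b * (2 * G.n) + (2 * G.n - 1 - k))).hist = h at g1 g2 ⊢
  have hl : h.length = i * T G.n + b * (2 * G.n) + (2 * G.n - 1 - k) + 1 := by
    rw [← hs]; exact hist_length ..
  have h1 : i * T G.n + b * (2 * G.n) + (2 * G.n - 1 - k) - i * T G.n
    = (2 * G.n - 1 - k) + b * (2 * G.n) := by omega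
  have h2 : ((2 * G.n - 1 - k) + b * (2 * G.n)) / (2 * G.n) = b := by
    rw [Nat.add_mul_div_right _ _ (by omega), Nat.div_eq_of_lt (by omega), zero_add]
  have h3 : ((2 * G.n - 1 - k) + b * (2 * G.n)) % (2 * G.n) = 2 * G.n - 1 - k := by
    rw [Nat.add_mul_mod_self_right, Nat.mod_eq_of_lt (by omega)]
  have h4 : 2 * G.n - 1 - (2 * G.n - 1 - k) = k := by omega
  conv_lhs => unfold prot
  simp only [hl, Nat.add_sub_cancel, h1, h2, h3, h4, g1, g2]
  rw [if_neg (by omega), if_neg (by omega)]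

theorem back (b : ℕ) (hb : b < G.n ^ G.n) (k : ℕ) (hk : k ≤ G.n) :
    (G.runR (prot G.n i) u (i * T G.n + b * (2 * G.n) + (2 * G.n - k))).pos =
      (G.runR (prot G.n i) u (i * T G.n + b * (2 * G.n) + k)).pos := by
  induction hk using Nat.decreasingInduction with
  | self => congr 3; omega
  | of_succ k hk ih =>
    have hf := act_fwd G u i b k hb hk
    have hw := act_bwd G u i b k hb hk
    have e1 : 2 * G.n - (k + 1) = 2 * G.n - 1 - k := by omega
    have e2 : i * T G.n + b * (2 * G.n) + (2 * G.n - k) =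
      i * T G.n + b * (2 * G.n) + (2 * G.n - 1 - k) + 1 := by omega
    rw [e1] at ih
    rw [e2]
    by_cases hd : dig G.n b k < G.deg (G.runR (prot G.n i) u (i * T G.n + b * (2 * G.n) + k)).pos
    · obtain ⟨hp, he⟩ := run_move G _ u _ _ hf hd
      rw [if_pos hd, he] at hw
      rw [← add_assoc, hp] at ih
      have hlt := G.mtch_lt _ _ hd
      have hin := G.mtch_invol _ _ hd
      have := (run_move G _ u _ _ hw (by rw [ih]; exact hlt)).1
      rw [this, ih, hin]
    · rw [if_neg hd] at hw
      rw [run_stay G _ u _ hw, ih, ← add_assoc, run_bad G _ u _ _ hf hd]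

theorem wait_pos (t : ℕ) (ht : t ≤ i * T G.n) : (G.runR (prot G.n i) u t).pos = u := by
  induction t with
  | zero => rfl
  | succ t ih =>
    rw [run_stay G _ u t (act_wait G u i t (Or.inl (by omega))), ih (by omega)]

theorem block_start (b : ℕ) (hb : b ≤ G.n ^ G.n) :
    (G.runR (prot G.n i) u (i * T G.n + b * (2 * G.n))).pos = u := by
  induction b with
  | zero => exact wait_pos G u i _ (by simp)
  | succ b ih =>
    have h := back G u i b (by omega) 0 (by omega)
    rw [Nat.sub_zero, add_zero, ih (by omega)] at h
    rw [Nat.add_mul, one_mul, ← add_assoc]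
    exact h

theorem end_pos (t : ℕ) (ht : i * T G.n + T G.n ≤ t) : (G.runR (prot G.n i) u t).pos = u := by
  induction t, ht using Nat.le_induction with
  | base => exact block_start G u i _ le_rfl
  | succ t ht ih => rw [run_stay G _ u t (act_wait G u i t (Or.inr ht)), ih]

/-- Underlying simple graph. -/
def sg : SimpleGraph (Fin G.n) where
  Adj a b := ∃ p < G.deg a, (G.mtch a p).1 = b
  symm := ⟨by
    rintro a b ⟨p, hp, rfl⟩
    exact ⟨(G.mtch a p).2, G.mtch_lt a p hp, by rw [G.mtch_invol a p hp]⟩⟩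
  loopless := ⟨by
    rintro a ⟨p, hp, h⟩
    exact G.no_loops a p hp h⟩

theorem reach (v w : Fin G.n) : (sg G).Reachable v w := by
  rw [SimpleGraph.reachable_iff_reflTransGen]
  exact G.connected v w

theorem exists_ports (v : Fin G.n) : ∃ (f : ℕ → ℕ) (q : ℕ → Fin G.n) (l : ℕ), l < G.n ∧
    (∀ k, f k < G.n) ∧ q 0 = u ∧ q l = v ∧
    ∀ k < l, f k < G.deg (q k) ∧ (G.mtch (q k) (f k)).1 = q (k + 1) := by
  classical
  obtain ⟨p, hp⟩ := (reach G u v).exists_isPath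
  have hl := hp.length_lt
  rw [Fintype.card_fin] at hl
  have : ∀ k, ∃ m, m < G.n ∧ (k < p.length →
      m < G.deg (p.getVert k) ∧ (G.mtch (p.getVert k) m).1 = p.getVert (k + 1)) := by
    intro k
    by_cases hk : k < p.length
    · obtain ⟨m, hm, h⟩ := p.adj_getVert_succ hk
      exact ⟨m, hm.trans_le (deg_le G _), fun _ => ⟨hm, h⟩⟩
    · exact ⟨0, G.npos, fun h => absurd h hk⟩
  choose f hf using this
  exact ⟨f, p.getVert, p.length, hl, fun k => (hf k).1, by simp, by simp, fun k hk => (hf k).2 hk⟩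

theorem visits (v : Fin G.n) : ∃ r, i * T G.n ≤ r ∧ r ≤ i * T G.n + T G.n ∧
    (G.runR (prot G.n i) u r).pos = v := by
  obtain ⟨f, q, l, hl, hf, h0, h1, hs⟩ := exists_ports G u v
  obtain ⟨b, hb, hd⟩ := exists_digits G.n G.n f hf
  have key : ∀ k ≤ l, (G.runR (prot G.n i) u (i * T G.n + b * (2 * G.n) + k)).pos = q k := by
    intro k hk
    induction k with
    | zero => rw [h0]; exact block_start G u i b hb.le
    | succ k ih =>
      have ih := ih (by omega)
      obtain ⟨s1, s2⟩ := hs k (by omega)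
      have ha := act_fwd G u i b k hb (by omega)
      rw [hd k (by omega)] at ha
      have := (run_move G _ u _ _ ha (by rw [ih]; exact s1)).1
      rw [← add_assoc, this, ih, s2]
  have hlt := block_lt (n := G.n) (k := l) hb (by omega)
  exact ⟨_, by omega, by omega, (key l le_rfl).trans h1⟩

theorem meet (i j : ℕ) (hij : i < j) (u v : Fin G.n) :
    ∃ r, r ≤ i * T G.n + T G.n ∧ r ≤ j * T G.n + T G.n ∧
      (G.runR (prot G.n i) u r).pos = (G.runR (prot G.n j) v r).pos := by
  obtain ⟨r, _, h2, h3⟩ := visits G u i v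
  have hle : i * T G.n + T G.n ≤ j * T G.n := by
    rw [← Nat.succ_mul]; exact Nat.mul_le_mul_right _ hij
  exact ⟨r, h2, by omega, by rw [h3, wait_pos G v j r (by omega)]⟩

theorem comp_tau : Computable₂ (fun n i : ℕ => i * T n + T n) := by
  have hp : Primrec₂ ((· ^ ·) : ℕ → ℕ → ℕ) := Primrec₂.unpaired'.1 Nat.Primrec.pow
  have hT : Primrec T :=
    Primrec.nat_mul.comp (hp.comp Primrec.id Primrec.id)
      (Primrec.nat_mul.comp (Primrec.const 2) Primrec.id)
  exact Primrec₂.to_comp (Primrec.nat_add.comp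
    (Primrec.nat_mul.comp Primrec.snd (hT.comp Primrec.fst)) (hT.comp Primrec.fst))

end Rdv



/-- There are a computable function `τ` and protocols `σ n i` (for an
agent with identity `i` in a graph of known size `n`) such that in every `n`-node graph:
(a) the agent never halts before round `τ n i`, is back at its start node at round
`τ n i` and stays there afterwards; and (b) two agents with distinct identities `i ≠ j`
started anywhere meet by round `min (τ n i) (τ n j)`. -/
theorem exists_rendezvous_protocol :
    ∃ (τ : ℕ → ℕ → ℕ) (σ : ℕ → ℕ → RProtocol),
      Computable₂ τ ∧
      ∀ G : PortGraph,
        (∀ i : ℕ, 1 ≤ i → ∀ u : Fin G.n,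
          (∀ s : ℕ, s < τ G.n i → G.actR (σ G.n i) u s ≠ RAction.halt) ∧
          ∀ r : ℕ, τ G.n i ≤ r → (G.runR (σ G.n i) u r).pos = u) ∧
        (∀ i j : ℕ, 1 ≤ i → 1 ≤ j → i ≠ j → ∀ u v : Fin G.n,
          ∃ r : ℕ, r ≤ min (τ G.n i) (τ G.n j) ∧
            (G.runR (σ G.n i) u r).pos = (G.runR (σ G.n j) v r).pos) := by
  refine ⟨fun n i => i * Rdv.T n + Rdv.T n, Rdv.prot, Rdv.comp_tau, fun G => ⟨?_, ?_⟩⟩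
  · intro i _ u
    exact ⟨fun s _ => Rdv.prot_ne_halt _ _ _, fun r hr => Rdv.end_pos G u i r hr⟩
  · intro i j _ _ hij u v
    rcases Nat.lt_or_gt_of_ne hij with h | h
    · obtain ⟨r, h1, h2, h3⟩ := Rdv.meet G i j h u v
      exact ⟨r, le_min h1 h2, h3⟩
    · obtain ⟨r, h1, h2, h3⟩ := Rdv.meet G j i h v u
      exact ⟨r, le_min h2 h1, h3.symm⟩
end

section
/- There exists a protocol for synchronous mobile agents, parameterized by the agent's identity and the team size k, such that for every k > 1, every port-labeled graph G (of unknown size), and every initial placement of k agents with distinct positive-integer identities at nodes of G (possibly several agents at the same node), when all k agents start the protocol simultaneously there is a round at which all k agents are located at the same node. -/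
/-- Observation of an agent in a team: degree of the current node, entry port
(`0` initially), and the set of identities of the agents currently at the node. -/
abbrev MObs : Type := ℕ × ℕ × Finset ℕ

inductive MAction : Type
  | stay
  | move (p : ℕ)

/-- A protocol for a team of agents, parameterized by the agent's identity and
the team size, mapping histories of observations to actions. -/
abbrev MProtocol : Type := ℕ → ℕ → List MObs → MAction

structure MState (G : PortGraph) (k : ℕ) where
  pos : Fin k → Fin G.n
  entry : Fin k → ℕ
  hist : Fin k → List MObs

def mObs (G : PortGraph) (k : ℕ) (ident : Fin k → ℕ)
    (pos : Fin k → Fin G.n) (entry : Fin k → ℕ) (a : Fin k) : MObs :=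
  (G.deg (pos a), entry a, (Finset.univ.filter fun b => pos b = pos a).image ident)

def mStep (G : PortGraph) (k : ℕ) (ident : Fin k → ℕ) (σ : MProtocol)
    (c : MState G k) : MState G k :=
  let next : Fin k → Fin G.n × ℕ := fun a =>
    match σ (ident a) k (c.hist a) with
    | .stay => (c.pos a, c.entry a)
    | .move p =>
        if 1 ≤ p ∧ p - 1 < G.deg (c.pos a) then
          ((G.mtch (c.pos a) (p - 1)).1, (G.mtch (c.pos a) (p - 1)).2 + 1)
        else (c.pos a, c.entry a)
  { pos := fun a => (next a).1
    entry := fun a => (next a).2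
    hist := fun a => c.hist a ++ [mObs G k ident (fun b => (next b).1) (fun b => (next b).2) a] }

/-- The synchronous execution of protocol `σ` by a team of `k` agents with
identities `ident` starting at nodes `start`. -/
def mRun (G : PortGraph) (k : ℕ) (ident : Fin k → ℕ) (σ : MProtocol)
    (start : Fin k → Fin G.n) : ℕ → MState G k
  | 0 => ⟨start, fun _ => 0, fun a => [mObs G k ident start (fun _ => 0) a]⟩
  | t + 1 => mStep G k ident σ (mRun G k ident σ start t)

/-- One step in a raw transition table on `ℕ`; port `0` and invalid ports mean staying. -/
def rawStep (L : List (List ℕ)) (v p : ℕ) : ℕ :=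
  if p = 0 then v else (L.getD v []).getD (p - 1) v

/-- Following the port sequence `w` in a raw transition table. -/
def rawRun (L : List (List ℕ)) (v : ℕ) (w : ℕ → ℕ) : ℕ → ℕ
  | 0 => v
  | t + 1 => rawStep L (rawRun L v w t) (w t)

lemma rawRun_congr (L : List (List ℕ)) (v : ℕ) (w w' : ℕ → ℕ) (r : ℕ)
    (h : ∀ t < r, w t = w' t) : rawRun L v w r = rawRun L v w' r := by
  induction r with
  | zero => rfl
  | succ r ih =>
    simp only [rawRun]
    rw [ih (fun t ht => h t (by omega)), h r (by omega)]

lemma rawRun_add (L : List (List ℕ)) (v : ℕ) (w : ℕ → ℕ) (T r : ℕ) :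
    rawRun L v w (T + r) = rawRun L (rawRun L v w T) (fun t => w (T + t)) r := by
  induction r with
  | zero => rfl
  | succ r ih =>
    rw [← Nat.add_assoc]
    simp only [rawRun]
    rw [ih]

/-- The oblivious schedules that gather a given raw initial configuration. -/
def gatherSet (h : List (List ℕ) × List (ℕ × ℕ)) : Set (ℕ × ℕ → ℕ) :=
  {s | ∃ r, ∀ x ∈ h.2, ∀ y ∈ h.2,
    rawRun h.1 x.2 (fun t => s (x.1, t)) r = rawRun h.1 y.2 (fun t => s (y.1, t)) r}

lemma continuous_rawRun (L : List (List ℕ)) (i v r : ℕ) :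
    Continuous (fun s : ℕ × ℕ → ℕ => rawRun L v (fun t => s (i, t)) r) := by
  induction r with
  | zero => exact continuous_const
  | succ r ih =>
    have h : Continuous (fun q : ℕ × ℕ => rawStep L q.1 q.2) := continuous_of_discreteTopology
    exact h.comp (ih.prodMk (continuous_apply (i, r)))

lemma isOpen_gatherSet (h : List (List ℕ) × List (ℕ × ℕ)) : IsOpen (gatherSet h) := by
  have : gatherSet h = ⋃ r, ⋂ x ∈ h.2.toFinset, ⋂ y ∈ h.2.toFinset, {s : ℕ × ℕ → ℕ |
      rawRun h.1 x.2 (fun t => s (x.1, t)) r = rawRun h.1 y.2 (fun t => s (y.1, t)) r} := by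
    ext s
    simp [gatherSet]
  rw [this]
  refine isOpen_iUnion fun r => isOpen_biInter_finset fun x _ => isOpen_biInter_finset fun y _ => ?_
  have hc := (continuous_rawRun h.1 x.1 x.2 r).prodMk (continuous_rawRun h.1 y.1 y.2 r)
  exact (isOpen_discrete {q : ℕ × ℕ | q.1 = q.2}).preimage hc

/-- The raw transition table of a port-labeled graph. -/
def PortGraph.raw (G : PortGraph) : List (List ℕ) :=
  List.ofFn fun v : Fin G.n => (List.range (G.deg v)).map fun i => ((G.mtch v i).1 : ℕ)

lemma rawStep_raw (G : PortGraph) (v : Fin G.n) (p : ℕ) :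
    rawStep G.raw v p =
      ((if 1 ≤ p ∧ p - 1 < G.deg v then (G.mtch v (p - 1)).1 else v : Fin G.n) : ℕ) := by
  have h1 : G.raw.getD v [] = (List.range (G.deg v)).map fun i => ((G.mtch v i).1 : ℕ) := by
    simp [PortGraph.raw]
  unfold rawStep
  rw [h1]
  by_cases hp : p = 0
  · simp [hp]
  · by_cases hd : p - 1 < G.deg v
    · have : 1 ≤ p := by omega
      simp [hp, hd, this]
    · simp [hp, hd, List.getD]

lemma rawRun_raw_lt (G : PortGraph) (v : Fin G.n) (w : ℕ → ℕ) (r : ℕ) :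
    ∃ u : Fin G.n, rawRun G.raw v w r = u := by
  induction r with
  | zero => exact ⟨v, rfl⟩
  | succ r ih =>
    obtain ⟨u, hu⟩ := ih
    simp only [rawRun]
    rw [hu, rawStep_raw]
    exact ⟨_, rfl⟩

lemma exists_path (G : PortGraph) (u z : Fin G.n) :
    ∃ (w : ℕ → ℕ) (N : ℕ), ∀ r ≥ N, rawRun G.raw u w r = z := by
  induction G.connected u z using Relation.ReflTransGen.head_induction_on with
  | refl =>
    refine ⟨fun _ => 0, 0, fun r _ => ?_⟩
    induction r with
    | zero => rfl
    | succ r ih =>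
      simp only [rawRun]
      rw [ih (Nat.zero_le _)]
      simp [rawStep]
  | head h _ ih =>
    rename_i a c _
    obtain ⟨i, hi, hc⟩ := h
    obtain ⟨w, N, hw⟩ := ih
    refine ⟨fun t => if t = 0 then i + 1 else w (t - 1), N + 1, fun r hr => ?_⟩
    obtain ⟨r, rfl⟩ : ∃ q, r = 1 + q := ⟨r - 1, by omega⟩
    rw [rawRun_add]
    have h1 : rawRun G.raw a (fun t => if t = 0 then i + 1 else w (t - 1)) 1 = c := by
      simp only [rawRun]
      rw [rawStep_raw]
      simp [hi, hc]
    rw [h1, ← hw r (by omega)]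
    apply rawRun_congr
    intro t _
    simp

/-- The raw encoding of an initial configuration. -/
def rawConf (G : PortGraph) (k : ℕ) (ident : Fin k → ℕ) (start : Fin k → Fin G.n) :
    List (List ℕ) × List (ℕ × ℕ) :=
  (G.raw, List.ofFn fun a => (ident a, (start a : ℕ)))

lemma dense_gatherSet (G : PortGraph) (k : ℕ) (ident : Fin k → ℕ)
    (hinj : Function.Injective ident) (start : Fin k → Fin G.n) :
    Dense (gatherSet (rawConf G k ident start)) := by
  rw [dense_iff_inter_open]
  rintro U hU ⟨s, hs⟩
  obtain ⟨I, u, hu, hsub⟩ := isOpen_pi_iff.1 hU s hs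
  obtain ⟨T, hT⟩ : ∃ T, ∀ x ∈ I, x.2 < T :=
    ⟨I.sup Prod.snd + 1, fun x hx => Nat.lt_succ_of_le (Finset.le_sup (f := Prod.snd) hx)⟩
  choose p hp using fun a => rawRun_raw_lt G (start a) (fun t => s (ident a, t)) T
  choose w N hw using fun a => exists_path G (p a) ⟨0, G.npos⟩
  refine ⟨fun x => if x.2 < T then s x else
    Function.extend ident w (fun _ _ => 0) x.1 (x.2 - T), hsub ?_, ?_⟩
  · intro x hx
    have := hT x hx
    simpa [this] using (hu x hx).2
  · refine ⟨T + Finset.univ.sup N, ?_⟩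
    have key : ∀ a, rawRun G.raw (start a) (fun t => if t < T then s (ident a, t) else
        Function.extend ident w (fun _ _ => 0) (ident a) (t - T)) (T + Finset.univ.sup N)
        = 0 := by
      intro a
      rw [rawRun_add, rawRun_congr _ _ _ (fun t => s (ident a, t)) T
        (fun t ht => by simp [ht]), hp a]
      have h2 := hw a (Finset.univ.sup N) (Finset.le_sup (Finset.mem_univ a))
      rw [rawRun_congr _ _ _ (w a) _ (fun t _ => by simp [hinj.extend_apply])]
      exact h2
    intro x hx y hy
    simp only [rawConf, List.mem_ofFn] at hx hy
    obtain ⟨a, rfl⟩ := hx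
    obtain ⟨b, rfl⟩ := hy
    exact (key a).trans (key b).symm

lemma exists_schedule : ∃ s : ℕ × ℕ → ℕ, ∀ (k : ℕ) (G : PortGraph) (ident : Fin k → ℕ),
    Function.Injective ident → ∀ start : Fin k → Fin G.n,
      s ∈ gatherSet (rawConf G k ident start) := by
  have hd : Dense (⋂ h : {h // Dense (gatherSet h)}, gatherSet h.1) :=
    dense_iInter_of_isOpen (fun h => isOpen_gatherSet h.1) (fun h => h.2)
  obtain ⟨s, hs⟩ := hd.nonempty
  refine ⟨s, fun k G ident hinj start => ?_⟩
  exact Set.mem_iInter.1 hs ⟨_, dense_gatherSet G k ident hinj start⟩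

lemma mRun_hist_length (G : PortGraph) (k : ℕ) (ident : Fin k → ℕ) (σ : MProtocol)
    (start : Fin k → Fin G.n) (t : ℕ) (a : Fin k) :
    ((mRun G k ident σ start t).hist a).length = t + 1 := by
  induction t with
  | zero => rfl
  | succ t ih => simp [mRun, mStep, ih]

lemma mRun_pos (G : PortGraph) (k : ℕ) (ident : Fin k → ℕ) (s : ℕ × ℕ → ℕ)
    (start : Fin k → Fin G.n) (t : ℕ) (a : Fin k) :
    ((mRun G k ident (fun i _ l => .move (s (i, l.length - 1))) start t).pos a : ℕ) =
      rawRun G.raw (start a) (fun t => s (ident a, t)) t := by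
  induction t with
  | zero => rfl
  | succ t ih =>
    simp only [rawRun]
    rw [← ih, rawStep_raw]
    simp only [mRun, mStep, mRun_hist_length, Nat.add_sub_cancel]
    split_ifs <;> rfl

/-- There is a protocol (parameterized by the agent identity and the
team size `k`) gathering, for every `k > 1`, every graph of unknown size and every initial
placement of `k` agents with distinct positive identities, all `k` agents at one node. -/
theorem exists_gathering_protocol :
    ∃ σ : MProtocol, ∀ k : ℕ, 1 < k →
      ∀ (G : PortGraph) (ident : Fin k → ℕ),
        (∀ a, 0 < ident a) → Function.Injective ident →
        ∀ start : Fin k → Fin G.n,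
          ∃ r : ℕ, ∀ a b : Fin k,
            (mRun G k ident σ start r).pos a = (mRun G k ident σ start r).pos b := by
  obtain ⟨s, hs⟩ := exists_schedule
  refine ⟨fun i _ l => .move (s (i, l.length - 1)), fun k _ G ident _ hinj start => ?_⟩
  obtain ⟨r, hr⟩ := hs k G ident hinj start
  refine ⟨r, fun a b => Fin.ext ?_⟩
  rw [mRun_pos, mRun_pos]
  exact hr (ident a, (start a : ℕ)) (List.mem_ofFn.2 ⟨a, rfl⟩)
    (ident b, (start b : ℕ)) (List.mem_ofFn.2 ⟨b, rfl⟩)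
end

section
/- There exists a protocol for a single agent equipped with a movable token such that, for every port-labeled graph G and every start node v (with the token initially located at v), the execution of the protocol halts after finitely many rounds and outputs a port-labeled graph, with a distinguished node, that is isomorphic to G by a port-preserving isomorphism mapping the distinguished node to v. -/
/-- Observation of an agent with a token: degree, entry port, token present? -/
abbrev TObs : Type := ℕ × ℕ × Bool

/-- Actions of an agent with a movable token: halt producing as output a
port-labeled graph with a distinguished node, stay, or move through port `p`,
carrying the token or not. -/
inductive TAction : Type
  | halt (output : Σ G : PortGraph, Fin G.n)
  | stay
  | move (p : ℕ) (carry : Bool)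

abbrev TProtocol : Type := List TObs → TAction

structure TState (G : PortGraph) where
  pos : Fin G.n
  entry : ℕ
  token : Fin G.n
  hist : List TObs

def PortGraph.stepT (G : PortGraph) (σ : TProtocol) (c : TState G) : TState G :=
  let next : Fin G.n × ℕ × Fin G.n :=
    match σ c.hist with
    | .halt _ => (c.pos, c.entry, c.token)
    | .stay => (c.pos, c.entry, c.token)
    | .move p carry =>
        if 1 ≤ p ∧ p - 1 < G.deg c.pos then
          ((G.mtch c.pos (p - 1)).1, (G.mtch c.pos (p - 1)).2 + 1,
            if carry ∧ c.token = c.pos then (G.mtch c.pos (p - 1)).1 else c.token)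
        else (c.pos, c.entry, c.token)
  ⟨next.1, next.2.1, next.2.2,
    c.hist ++ [(G.deg next.1, next.2.1, decide (next.2.2 = next.1))]⟩

/-- The execution of token protocol `σ` in `G` from `v`, the token initially at `v`. -/
def PortGraph.runT (G : PortGraph) (σ : TProtocol) (v : Fin G.n) : ℕ → TState G
  | 0 => ⟨v, 0, v, [(G.deg v, 0, true)]⟩
  | t + 1 => G.stepT σ (G.runT σ v t)

def PortGraph.actT (G : PortGraph) (σ : TProtocol) (v : Fin G.n) (t : ℕ) : TAction :=
  σ (G.runT σ v t).hist

namespace MapDraw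

/-- Memory of the exploring protocol: remaining forward word, undo stack, last observation. -/
structure Mem where
  k : ℕ
  fwd : List (ℕ × Bool)
  stack : List (ℕ × Bool)
  last : TObs

def word (k : ℕ) : List (ℕ × Bool) := (Encodable.decode k).getD []

lemma exists_word (w : List (ℕ × Bool)) : ∃ k, word k = w :=
  ⟨Encodable.encode w, by simp [word]⟩

def act (m : Mem) : TAction :=
  match m.fwd with
  | a :: _ => .move (a.1 + 1) a.2
  | [] => match m.stack with
    | a :: _ => .move (a.1 + 1) a.2
    | [] => .stay

def update (m : Mem) (o : TObs) : Mem :=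
  match m.fwd with
  | a :: r => if a.1 < m.last.1 then ⟨m.k, r, (o.2.1 - 1, a.2 && m.last.2.2) :: m.stack, o⟩
      else ⟨m.k, r, m.stack, o⟩
  | [] => match m.stack with
    | _ :: s => ⟨m.k, [], s, o⟩
    | [] => ⟨m.k + 1, word m.k, [], o⟩

def mem (h : List TObs) : Mem := h.foldl update ⟨0, [], [], (0, 0, false)⟩

/-- The exploring protocol, which never halts. -/
def explore : TProtocol := fun h => act (mem h)

/-- One action on the pair (position, token). -/
def gst (G : PortGraph) (s : Fin G.n × Fin G.n) (a : ℕ × Bool) : Fin G.n × Fin G.n :=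
  if a.1 < G.deg s.1 then
    ((G.mtch s.1 a.1).1, if a.2 ∧ s.2 = s.1 then (G.mtch s.1 a.1).1 else s.2)
  else s

def exec (G : PortGraph) (s : Fin G.n × Fin G.n) (w : List (ℕ × Bool)) : Fin G.n × Fin G.n :=
  w.foldl (gst G) s

section run
variable (G : PortGraph) (v : Fin G.n)

def st (t : ℕ) : Fin G.n × Fin G.n :=
  ((G.runT explore v t).pos, (G.runT explore v t).token)

def mm (t : ℕ) : Mem := mem (G.runT explore v t).hist

def ob (t : ℕ) : TObs :=
  (G.deg (G.runT explore v t).pos, (G.runT explore v t).entry,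
    decide ((G.runT explore v t).token = (G.runT explore v t).pos))

lemma hist_succ (σ : TProtocol) (t : ℕ) : ∃ o, (G.runT σ v (t+1)).hist =
    (G.runT σ v t).hist ++ [o] := ⟨_, rfl⟩

lemma hist_succ' (t : ℕ) : (G.runT explore v (t+1)).hist =
    (G.runT explore v t).hist ++ [ob G v (t+1)] := rfl

lemma mm_succ (t : ℕ) : mm G v (t+1) = update (mm G v t) (ob G v (t+1)) := by
  simp [mm, mem, hist_succ']

lemma update_last (m : Mem) (o : TObs) : (update m o).last = o := by
  unfold update
  split
  · split <;> rfl
  · split <;> rfl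

lemma mm_last (t : ℕ) : (mm G v t).last = ob G v t := by
  cases t with
  | zero => simp [mm, mem, PortGraph.runT, update_last, ob]
  | succ t => rw [mm_succ, update_last]

lemma hist_length (σ : TProtocol) (t : ℕ) : (G.runT σ v t).hist.length = t + 1 := by
  induction t with
  | zero => rfl
  | succ t ih =>
    obtain ⟨o, ho⟩ := hist_succ G v σ t
    simp [ho, ih]

lemma hist_prefix (σ : TProtocol) (s d : ℕ) :
    (G.runT σ v s).hist = (G.runT σ v (s+d)).hist.take (s+1) := by
  induction d with
  | zero => rw [List.take_of_length_le (by rw [hist_length, Nat.add_zero]), Nat.add_zero]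
  | succ d ih =>
    obtain ⟨o, ho⟩ := hist_succ G v σ (s+d)
    rw [← Nat.add_assoc, ho, List.take_append_of_le_length (by rw [hist_length]; omega), ← ih]

lemma run_move (t : ℕ) (p : ℕ) (c : Bool) (h : explore (G.runT explore v t).hist = .move (p+1) c) :
    st G v (t+1) = gst G (st G v t) (p, c) ∧
    (p < G.deg (st G v t).1 → (ob G v (t+1)).2.1 = (G.mtch (st G v t).1 p).2 + 1) := by
  have e : G.runT explore v (t+1) = G.stepT explore (G.runT explore v t) := rfl
  unfold st ob gst
  rw [e]
  unfold PortGraph.stepT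
  simp only [h]
  by_cases hp : p < G.deg (G.runT explore v t).pos <;> simp [hp]

lemma step_fwd (t : ℕ) (a : ℕ × Bool) (r : List (ℕ × Bool)) (h : (mm G v t).fwd = a :: r) :
    st G v (t+1) = gst G (st G v t) a ∧ (mm G v (t+1)).fwd = r ∧
    (mm G v (t+1)).k = (mm G v t).k ∧
    (mm G v (t+1)).stack = if a.1 < G.deg (st G v t).1 then
      ((G.mtch (st G v t).1 a.1).2, a.2 && decide ((st G v t).2 = (st G v t).1))
        :: (mm G v t).stack else (mm G v t).stack := by
  have hact : explore (G.runT explore v t).hist = .move (a.1+1) a.2 := by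
    change act (mm G v t) = _
    simp [act, h]
  obtain ⟨h1, h2⟩ := run_move G v t _ _ hact
  refine ⟨h1, ?_⟩
  have hl : (mm G v t).last = (G.deg (st G v t).1, (ob G v t).2.1,
    decide ((st G v t).2 = (st G v t).1)) := mm_last G v t
  rw [mm_succ]
  unfold update
  simp only [h, hl]
  by_cases hp : a.1 < G.deg (st G v t).1
  · simp [hp, h2 hp]
  · simp [hp]

lemma step_back (t : ℕ) (a : ℕ × Bool) (r : List (ℕ × Bool)) (h : (mm G v t).fwd = [])
    (h' : (mm G v t).stack = a :: r) :
    st G v (t+1) = gst G (st G v t) a ∧ (mm G v (t+1)).fwd = [] ∧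
    (mm G v (t+1)).k = (mm G v t).k ∧ (mm G v (t+1)).stack = r := by
  have hact : explore (G.runT explore v t).hist = .move (a.1+1) a.2 := by
    change act (mm G v t) = _
    simp [act, h, h']
  refine ⟨(run_move G v t _ _ hact).1, ?_⟩
  rw [mm_succ]
  unfold update
  simp [h, h']

lemma step_new (t : ℕ) (h : (mm G v t).fwd = []) (h' : (mm G v t).stack = []) :
    st G v (t+1) = st G v t ∧ (mm G v (t+1)).fwd = word (mm G v t).k ∧
    (mm G v (t+1)).k = (mm G v t).k + 1 ∧ (mm G v (t+1)).stack = [] := by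
  have hact : explore (G.runT explore v t).hist = .stay := by
    change act (mm G v t) = _
    simp [act, h, h']
  constructor
  · have e : G.runT explore v (t+1) = G.stepT explore (G.runT explore v t) := rfl
    unfold st
    rw [e]
    unfold PortGraph.stepT
    simp only [hact]
  · rw [mm_succ]
    unfold update
    simp [h, h']

lemma gst_undo (s : Fin G.n × Fin G.n) (a : ℕ × Bool) (h : a.1 < G.deg s.1) :
    gst G (gst G s a) ((G.mtch s.1 a.1).2, a.2 && decide (s.2 = s.1)) = s := by
  have h1 := G.mtch_lt _ _ h
  have h2 := G.mtch_invol _ _ h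
  obtain ⟨p, q⟩ := s
  obtain ⟨i, c⟩ := a
  simp only [gst, h, if_true] at *
  simp only [h1, if_true, h2]
  by_cases hc : c = true ∧ q = p
  · simp [hc]
  · simp [hc]

lemma inv (t : ℕ) : exec G (st G v t) (mm G v t).stack = (v, v) := by
  induction t with
  | zero => rfl
  | succ t ih =>
    rcases hf : (mm G v t).fwd with _ | ⟨a, r⟩
    · rcases hs : (mm G v t).stack with _ | ⟨a, r⟩
      · obtain ⟨h1, -, -, h4⟩ := step_new G v t hf hs
        rw [h1, h4, ← hs, ih]
      · obtain ⟨h1, -, -, h4⟩ := step_back G v t a r hf hs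
        rw [h1, h4, ← ih, hs]
        rfl
    · obtain ⟨h1, -, -, h4⟩ := step_fwd G v t a r hf
      rw [h1, h4]
      by_cases hp : a.1 < G.deg (st G v t).1
      · rw [if_pos hp, ← ih]
        simp only [exec, List.foldl_cons]
        rw [gst_undo G _ _ hp]
      · rw [if_neg hp, ← ih]
        simp [gst, hp]

lemma run_fwd (w : List (ℕ × Bool)) : ∀ t, (mm G v t).fwd = w →
    (mm G v (t + w.length)).fwd = [] ∧ (mm G v (t + w.length)).k = (mm G v t).k ∧
    st G v (t + w.length) = exec G (st G v t) w := by
  induction w with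
  | nil => intro t h; exact ⟨h, rfl, rfl⟩
  | cons a r ih =>
    intro t h
    obtain ⟨h1, h2, h3, -⟩ := step_fwd G v t a r h
    obtain ⟨i1, i2, i3⟩ := ih (t+1) h2
    have e : t + (a :: r).length = t + 1 + r.length := by simp; omega
    rw [e]
    refine ⟨i1, i2.trans h3, ?_⟩
    rw [i3, h1]
    rfl

lemma run_back (w : List (ℕ × Bool)) : ∀ t, (mm G v t).fwd = [] → (mm G v t).stack = w →
    (mm G v (t + w.length)).fwd = [] ∧ (mm G v (t + w.length)).k = (mm G v t).k ∧
    (mm G v (t + w.length)).stack = [] := by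
  induction w with
  | nil => intro t h h'; exact ⟨h, rfl, h'⟩
  | cons a r ih =>
    intro t h h'
    obtain ⟨h1, h2, h3, h4⟩ := step_back G v t a r h h'
    obtain ⟨i1, i2, i3⟩ := ih (t+1) h2 h4
    have e : t + (a :: r).length = t + 1 + r.length := by simp; omega
    rw [e]
    exact ⟨i1, i2.trans h3, i3⟩

lemma start (k : ℕ) : ∃ t, (mm G v t).k = k + 1 ∧ (mm G v t).fwd = word k ∧
    (mm G v t).stack = [] := by
  induction k with
  | zero => exact ⟨0, rfl, rfl, rfl⟩
  | succ k ih =>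
    obtain ⟨t, h1, h2, h3⟩ := ih
    obtain ⟨a1, a2, -⟩ := run_fwd G v _ t rfl
    obtain ⟨b1, b2, b3⟩ := run_back G v _ _ a1 rfl
    obtain ⟨-, c2, c3, c4⟩ := step_new G v _ b1 b3
    have e := b2.trans (a2.trans h1)
    exact ⟨_, by rw [c3, e], by rw [c2, e], c4⟩

end run

/-- The response to a word: degree, and token presence, at the end. -/
def resp (G : PortGraph) (v : Fin G.n) (w : List (ℕ × Bool)) : ℕ × Bool :=
  (G.deg (exec G (v, v) w).1, decide ((exec G (v, v) w).2 = (exec G (v, v) w).1))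

lemma exists_time (G : PortGraph) (v : Fin G.n) (w : List (ℕ × Bool)) :
    ∃ T, ∀ (T' : ℕ), T ≤ T' → ∀ (G' : PortGraph) (v' : Fin G'.n),
      (G'.runT explore v' T').hist = (G.runT explore v T').hist →
      resp G' v' w = resp G v w := by
  obtain ⟨k, rfl⟩ := exists_word w
  obtain ⟨t, h1, h2, h3⟩ := start G v k
  refine ⟨t + (word k).length, fun T' hT G' v' hh => ?_⟩
  have key : ∀ s, s ≤ T' → (G'.runT explore v' s).hist = (G.runT explore v s).hist := by
    intro s hs
    obtain ⟨d, rfl⟩ := Nat.exists_eq_add_of_le hs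
    rw [hist_prefix G' v' _ s d, hist_prefix G v _ s d, hh]
  have e1 : mm G' v' t = mm G v t := by unfold mm; rw [key t (by omega)]
  have e2 : mm G' v' (t + (word k).length) = mm G v (t + (word k).length) := by
    unfold mm; rw [key _ hT]
  have s1 : st G v t = (v, v) := by
    have := inv G v t
    rw [h3] at this
    exact this
  have s2 : st G' v' t = (v', v') := by
    have := inv G' v' t
    rw [e1, h3] at this
    exact this
  obtain ⟨-, -, x1⟩ := run_fwd G v _ t h2
  obtain ⟨-, -, x2⟩ := run_fwd G' v' (word k) t (by rw [e1]; exact h2)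
  have l := congrArg Mem.last e2
  rw [mm_last, mm_last] at l
  rw [s1] at x1
  rw [s2] at x2
  unfold resp
  rw [← x1, ← x2]
  simp only [ob, Prod.mk.injEq] at l
  simp only [st, Prod.mk.injEq]
  exact ⟨l.1, l.2.2⟩

/-- Walking along a port sequence. -/
def walk (G : PortGraph) (u : Fin G.n) (p : List ℕ) : Fin G.n :=
  p.foldl (fun u i => if i < G.deg u then (G.mtch u i).1 else u) u

def cw (p : List ℕ) : List (ℕ × Bool) := p.map fun i => (i, true)
def nw (p : List ℕ) : List (ℕ × Bool) := p.map fun i => (i, false)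

lemma exec_append (G : PortGraph) (s : Fin G.n × Fin G.n) (w w' : List (ℕ × Bool)) :
    exec G s (w ++ w') = exec G (exec G s w) w' := by simp [exec]

lemma walk_append (G : PortGraph) (s : Fin G.n) (w w' : List ℕ) :
    walk G s (w ++ w') = walk G (walk G s w) w' := by simp [walk]

lemma exec_cw (G : PortGraph) (p : List ℕ) : ∀ u, exec G (u, u) (cw p) = (walk G u p, walk G u p) := by
  induction p with
  | nil => intro u; rfl
  | cons i p ih =>
    intro u
    by_cases h : i < G.deg u
    · have := ih (G.mtch u i).1
      simpa [exec, cw, walk, gst, h] using this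
    · have := ih u
      simpa [exec, cw, walk, gst, h] using this

lemma exec_nw (G : PortGraph) (p : List ℕ) : ∀ u x, exec G (u, x) (nw p) = (walk G u p, x) := by
  induction p with
  | nil => intro u x; rfl
  | cons i p ih =>
    intro u x
    by_cases h : i < G.deg u
    · have := ih (G.mtch u i).1 x
      simpa [exec, nw, walk, gst, h] using this
    · have := ih u x
      simpa [exec, nw, walk, gst, h] using this

lemma exists_walk (G : PortGraph) (u v : Fin G.n) : ∃ p, walk G u p = v := by
  have h := G.connected u v
  induction h with
  | refl => exact ⟨[], rfl⟩
  | tail _ h ih =>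
    obtain ⟨p, hp⟩ := ih
    obtain ⟨i, hi, hb⟩ := h
    refine ⟨p ++ [i], ?_⟩
    rw [walk_append, hp]
    simp [walk, hi, hb]

def Iso (x y : Σ G : PortGraph, Fin G.n) : Prop :=
  ∃ e : Fin x.1.n ≃ Fin y.1.n, IsPortIso x.1 y.1 e ∧ e x.2 = y.2

lemma exists_words (G : PortGraph) (v : Fin G.n) :
    ∃ S : Set (List (ℕ × Bool)), S.Finite ∧ ∀ (G' : PortGraph) (v' : Fin G'.n),
      (∀ w ∈ S, resp G' v' w = resp G v w) → Iso ⟨G, v⟩ ⟨G', v'⟩ := by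
  choose P hP using fun u => exists_walk G v u
  choose Q hQ using fun u => exists_walk G u v
  let W : Fin G.n → List ℕ → List (ℕ × Bool) := fun u p => cw (P u) ++ nw (Q u) ++ nw p
  let S : Set (List (ℕ × Bool)) :=
    (Set.range fun u => nw (P u ++ Q u)) ∪ (Set.range fun u => nw (P u)) ∪
    (Set.range fun u => W u []) ∪ (Set.range fun x : Fin G.n × Fin G.n => W x.1 (P x.2)) ∪
    (Set.range fun x : Fin G.n × (Σ u : Fin G.n, Fin (G.deg u)) => W x.1 (P x.2.1 ++ [x.2.2.1]))
  refine ⟨S, ?_, fun G' v' hS => ?_⟩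
  · refine Set.Finite.union (Set.Finite.union (Set.Finite.union (Set.Finite.union ?_ ?_) ?_) ?_) ?_
    all_goals exact Set.finite_range _
  set f : Fin G.n → Fin G'.n := fun u => walk G' v' (P u) with hf
  have hA : ∀ u, walk G' (f u) (Q u) = v' := by
    intro u
    have := hS (nw (P u ++ Q u)) (by simp [S])
    simp only [resp, exec_nw, walk_append, hP, hQ, Prod.mk.injEq] at this
    have h2 := this.2
    simp only [decide_true, decide_eq_true_eq] at h2
    exact h2.symm
  have hC : ∀ u, G'.deg (f u) = G.deg u := by
    intro u
    have := hS (nw (P u)) (by simp [S])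
    simp only [resp, exec_nw, hP, Prod.mk.injEq] at this
    exact this.1
  have hW : ∀ u p, W u p ∈ S → (f u = walk G' v' p ↔ u = walk G v p) := by
    intro u p hm
    have := hS _ hm
    have hA' : walk G' (walk G' v' (P u)) (Q u) = v' := hA u
    simp only [resp, W, exec_append, exec_cw, exec_nw, hP, hQ, hA', Prod.mk.injEq,
      decide_eq_decide] at this
    exact this.2
  have hinj : Function.Injective f := by
    intro a b hab
    have := (hW a (P b) (by simp [S])).1 hab
    rwa [hP] at this
  have hv : f v = v' := (hW v [] (by simp [S])).2 rfl
  have hm : ∀ u i, i < G.deg u → (G'.mtch (f u) i).1 = f (G.mtch u i).1 := by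
    intro u i hi
    have hmem : W (G.mtch u i).1 (P u ++ [i]) ∈ S := by
      right
      exact ⟨((G.mtch u i).1, ⟨u, ⟨i, hi⟩⟩), rfl⟩
    have h1 := (hW _ _ hmem).2 (by rw [walk_append, hP]; simp [walk, hi])
    rw [h1, walk_append]
    have : i < G'.deg (walk G' v' (P u)) := by
      have := hC u
      simp only [hf] at this
      omega
    simp [hf, walk] at this ⊢
    simp [this]
  have hsurj : Function.Surjective f := by
    intro b
    have h := G'.connected v' b
    induction h with
    | refl => exact ⟨v, hv⟩
    | tail _ h ih =>
      obtain ⟨a, rfl⟩ := ih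
      obtain ⟨i, hi, rfl⟩ := h
      rw [hC] at hi
      exact ⟨_, (hm a i hi).symm⟩
  refine ⟨Equiv.ofBijective f ⟨hinj, hsurj⟩, ⟨hC, ?_⟩, hv⟩
  intro u i hi
  change G'.mtch (f u) i = (f (G.mtch u i).1, (G.mtch u i).2)
  refine Prod.ext (hm u i hi) ?_
  have hi' : i < G'.deg (f u) := by rw [hC]; exact hi
  have a1 := G'.mtch_lt _ _ hi'
  have a2 := G'.mtch_invol _ _ hi'
  have b1 := G.mtch_lt _ _ hi
  have b2 := G.mtch_invol _ _ hi
  have b3 := hm _ _ b1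
  rw [hm u i hi] at a1 a2
  refine G'.no_multi _ _ _ a1 (by rw [hC]; exact b1) ?_
  rw [a2, b3, b2]

/-- Consistency of a rooted graph with a history of the exploring protocol. -/
def Cons (x : Σ G : PortGraph, Fin G.n) (h : List TObs) : Prop :=
  ∃ t, (x.1.runT explore x.2 t).hist = h

def Det (h : List TObs) : Prop := ∃ x, Cons x h ∧ ∀ y, Cons y h → Iso x y

lemma exists_det (G : PortGraph) (v : Fin G.n) : ∃ T, Det (G.runT explore v T).hist := by
  obtain ⟨S, hfin, hS⟩ := exists_words G v
  choose T hT using exists_time G v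
  obtain ⟨B, hB⟩ := (hfin.image T).bddAbove
  refine ⟨B, ⟨G, v⟩, ⟨B, rfl⟩, ?_⟩
  rintro ⟨G', v'⟩ ⟨t, ht⟩
  have hl := congrArg List.length ht
  rw [hist_length, hist_length] at hl
  obtain rfl : t = B := by omega
  exact hS G' v' fun w hw => hT w t (hB ⟨w, hw, rfl⟩) G' v' ht

open Classical in
noncomputable def final : TProtocol := fun h =>
  if hd : Det h then .halt hd.choose else explore h

lemma explore_ne (h : List TObs) (o) : explore h ≠ .halt o := by
  unfold explore act
  split
  · simp
  · split <;> simp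

lemma run_eq (G : PortGraph) (v : Fin G.n) (t : ℕ)
    (h : ∀ s < t, ¬ Det (G.runT explore v s).hist) : G.runT final v t = G.runT explore v t := by
  induction t with
  | zero => rfl
  | succ t ih =>
    have i := ih fun s hs => h s (by omega)
    have e : final (G.runT explore v t).hist = explore (G.runT explore v t).hist := by
      simp [final, h t (by omega)]
    change G.stepT final (G.runT final v t) = G.stepT explore (G.runT explore v t)
    rw [i]
    unfold PortGraph.stepT
    rw [e]

end MapDraw

/-- There is a protocol for a single agent with a movable token which,
in every port-labeled graph from every start node, halts after finitely many rounds and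
outputs a port-labeled graph with a distinguished node which is port-preserving isomorphic
to the underlying graph, the distinguished node being mapped to the start node. -/
theorem exists_map_drawing_token_protocol :
    ∃ σ : TProtocol,
      ∀ (G : PortGraph) (v : Fin G.n),
        ∃ (t : ℕ) (out : Σ G' : PortGraph, Fin G'.n),
          G.actT σ v t = TAction.halt out ∧
          (∀ s : ℕ, s < t → ∀ o, G.actT σ v s ≠ TAction.halt o) ∧
          ∃ e : Fin out.1.n ≃ Fin G.n, IsPortIso out.1 G e ∧ e out.2 = v := by
  classical
  refine ⟨MapDraw.final, fun G v => ?_⟩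
  have hex := MapDraw.exists_det G v
  have hd := Nat.find_spec hex
  have hmin : ∀ s < Nat.find hex, ¬ MapDraw.Det (G.runT MapDraw.explore v s).hist :=
    fun s hs => Nat.find_min hex hs
  refine ⟨Nat.find hex, hd.choose, ?_, ?_, ?_⟩
  · unfold PortGraph.actT
    rw [MapDraw.run_eq G v _ hmin]
    exact dif_pos hd
  · intro s hs o
    unfold PortGraph.actT
    rw [MapDraw.run_eq G v s fun r hr => hmin r (by omega)]
    have : MapDraw.final (G.runT MapDraw.explore v s).hist
        = MapDraw.explore (G.runT MapDraw.explore v s).hist := dif_neg (hmin s hs)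
    rw [this]
    exact MapDraw.explore_ne _ o
  · exact hd.choose_spec.2 ⟨G, v⟩ ⟨_, rfl⟩
end
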